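/- arXiv:1903.06825 — 3 statements merged into one kernel-verified Lean document; each statement's English description precedes it below -/
import Mathlib

section
/- There are infinitely many composite natural numbers n such that n divides P(n), where P is the Perrin sequence. -/
/-- The Perrin sequence: `P 0 = 3`, `P 1 = 0`, `P 2 = 2`, and
`P (k+3) = P (k+1) + P k`. -/
def perrin : ℕ → ℤ
  | 0 => 3
  | 1 => 0
  | 2 => 2
  | (k + 3) => perrin (k + 1) + perrin k

/-!
The pseudoprimes are `n = 37 * 223 ^ a` with `a` a positive multiple of `18`.

Let `α, β, γ` be the roots of `X ^ 3 - X - 1`, so that `perrin n = α ^ n + β ^ n + γ ^ n`. Modulo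
`223` this cubic has three simple roots, whose `37`-th powers are `1, ω, ω ^ 2` for a primitive
cube root of unity `ω`. By Hensel's lemma `α, β, γ, ω` exist in `ℤ_[223]`, and raising congruences
modulo `p` to the power `p ^ a` turns them into congruences modulo `p ^ (a + 1)`, so with `p = 223`
`perrin (37 * p ^ a) ≡ 1 + ω ^ (p ^ a) + (ω ^ (p ^ a)) ^ 2 = 0` modulo `p ^ (a + 1)`.

Modulo `37` the Perrin sequence has period `1368`, and `223 ^ 18 ≡ 1` modulo `1368`.
Hence `perrin n ≡ perrin 37 ≡ 0` modulo `37` whenever `18 ∣ a`.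
-/

open Polynomial PadicInt

/-- `α, β, γ` are the three roots of `X ^ 3 - X - 1`, counted with multiplicity; encoded by Vieta's
formulas, so that the notion makes sense in any commutative ring. -/
structure PerrinRoots {R : Type*} [CommRing R] (α β γ : R) : Prop where
  sum_eq : α + β + γ = 0
  sum_mul_eq : α * β + β * γ + γ * α = -1
  prod_eq : α * β * γ = 1

namespace PerrinRoots

variable {R : Type*} [CommRing R] {α β γ : R}

theorem rotate (h : PerrinRoots α β γ) : PerrinRoots β γ α where
  sum_eq := by linear_combination h.sum_eq
  sum_mul_eq := by linear_combination h.sum_mul_eq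
  prod_eq := by linear_combination h.prod_eq

theorem pow_three_eq (h : PerrinRoots α β γ) : α ^ 3 = α + 1 := by
  linear_combination α ^ 2 * h.sum_eq - α * h.sum_mul_eq + h.prod_eq

theorem derivative_eq_mul (h : PerrinRoots α β γ) : 3 * α ^ 2 - 1 = (α - β) * (α - γ) := by
  linear_combination 2 * α * h.sum_eq - h.sum_mul_eq

theorem of_ne [NoZeroDivisors R] (hα : α ^ 3 = α + 1) (hβ : β ^ 3 = β + 1) (hne : α ≠ β) :
    PerrinRoots α β (-(α + β)) := by
  have hquad : α ^ 2 + α * β + β ^ 2 = 1 := by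
    refine mul_left_cancel₀ (sub_ne_zero.mpr hne) ?_
    linear_combination hα - hβ
  exact
    { sum_eq := by ring
      sum_mul_eq := by linear_combination -hquad
      prod_eq := by linear_combination hα - α * hquad }

theorem pow_eq_sq (h : PerrinRoots α β γ) {m : ℕ} (hα : α ^ m = 1) (hβ : (β ^ m) ^ 3 = 1) :
    γ ^ m = (β ^ m) ^ 2 := by
  have hprod : β ^ m * γ ^ m = 1 :=
    calc β ^ m * γ ^ m = α ^ m * β ^ m * γ ^ m := by rw [hα, one_mul]
      _ = 1 := by rw [← mul_pow, ← mul_pow, h.prod_eq, one_pow]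
  linear_combination (β ^ m) ^ 2 * hprod - γ ^ m * hβ

theorem perrin_eq_sum_pow (h : PerrinRoots α β γ) : ∀ n, (perrin n : R) = α ^ n + β ^ n + γ ^ n
  | 0 => by norm_num [perrin]
  | 1 => by simp [perrin, h.sum_eq]
  | 2 => by
      simp only [perrin, Int.cast_ofNat]
      linear_combination 2 * h.sum_mul_eq - (α + β + γ) * h.sum_eq
  | n + 3 => by
      rw [perrin, Int.cast_add, h.perrin_eq_sum_pow (n + 1), h.perrin_eq_sum_pow n]
      linear_combination -α ^ n * h.pow_three_eq - β ^ n * h.rotate.pow_three_eq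
        - γ ^ n * h.rotate.rotate.pow_three_eq

end PerrinRoots

section PadicLifting

variable {p : ℕ} [Fact p.Prime]

theorem toZMod_eq_iff_dvd_sub {x y : ℤ_[p]} :
    toZMod x = toZMod y ↔ (p : ℤ_[p]) ∣ x - y := by
  rw [← sub_eq_zero, ← map_sub, ← RingHom.mem_ker, ker_toZMod, maximalIdeal_eq_span_p,
    Ideal.mem_span_singleton]

theorem norm_lt_one_iff_toZMod_eq_zero {x : ℤ_[p]} : ‖x‖ < 1 ↔ toZMod x = 0 := by
  rw [norm_lt_one_iff_dvd, ← sub_zero x, ← toZMod_eq_iff_dvd_sub, map_zero, sub_zero]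

theorem exists_isRoot_toZMod_eq {f : ℤ_[p][X]} {r : ZMod p} (hr : (f.map toZMod).IsRoot r)
    (hr' : ¬ (derivative (f.map toZMod)).IsRoot r) :
    ∃ α : ℤ_[p], f.IsRoot α ∧ toZMod α = r := by
  obtain ⟨a, rfl⟩ := ZMod.ringHom_surjective (toZMod (p := p)) r
  rw [IsRoot.def, eval_map_apply, ← norm_lt_one_iff_toZMod_eq_zero] at hr
  rw [derivative_map, IsRoot.def, eval_map_apply, ← norm_lt_one_iff_toZMod_eq_zero] at hr'
  have hunit : ‖(derivative f).eval a‖ = 1 := (norm_le_one _).antisymm (not_lt.mp hr')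
  obtain ⟨α, hα, hclose, -⟩ := hensels_lemma (F := f) (a := a) (by
    simpa only [coe_aeval_eq_eval, hunit, one_pow] using hr)
  refine ⟨α, by simpa only [coe_aeval_eq_eval, IsRoot.def] using hα, ?_⟩
  rwa [coe_aeval_eq_eval, hunit, norm_lt_one_iff_dvd, ← toZMod_eq_iff_dvd_sub] at hclose

theorem exists_isPrimitiveRoot_toZMod_eq {k : ℕ} [NeZero k] {w : ZMod p}
    (hw : IsPrimitiveRoot w k) : ∃ ω : ℤ_[p], IsPrimitiveRoot ω k ∧ toZMod ω = w := by
  have : NeZero (k : ZMod p) := hw.neZero'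
  have hroot : (cyclotomic k (ZMod p)).IsRoot w := isRoot_cyclotomic_iff.mpr hw
  have hderiv : ¬ (derivative (cyclotomic k (ZMod p))).IsRoot w := by
    simpa only [coe_aeval_eq_eval, IsRoot.def] using
      (separable_cyclotomic k (ZMod p)).aeval_derivative_ne_zero (x := w) hroot
  rw [← map_cyclotomic k toZMod] at hroot hderiv
  obtain ⟨ω, hω, hωw⟩ := exists_isRoot_toZMod_eq hroot hderiv
  exact ⟨ω, isRoot_cyclotomic_iff.mp hω, hωw⟩

theorem PerrinRoots.exists_root_toZMod_eq {r s t : ZMod p} (h : PerrinRoots r s t)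
    (hrs : r ≠ s) (hrt : r ≠ t) : ∃ α : ℤ_[p], α ^ 3 = α + 1 ∧ toZMod α = r := by
  have hderiv : 3 * r ^ 2 - 1 ≠ 0 :=
    h.derivative_eq_mul ▸ mul_ne_zero (sub_ne_zero.mpr hrs) (sub_ne_zero.mpr hrt)
  obtain ⟨α, hα, hαr⟩ := exists_isRoot_toZMod_eq (f := X ^ 3 - X - 1) (r := r)
    (by simp [h.pow_three_eq])
    (by simpa [one_add_one_eq_two, two_add_one_eq_three] using hderiv)
  refine ⟨α, ?_, hαr⟩
  simp only [IsRoot.def, eval_sub, eval_pow, eval_X, eval_one] at hα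
  linear_combination hα

theorem PerrinRoots.exists_toZMod_eq {r s t : ZMod p} (h : PerrinRoots r s t)
    (hrs : r ≠ s) (hst : s ≠ t) (hrt : r ≠ t) :
    ∃ α β γ : ℤ_[p], PerrinRoots α β γ ∧ toZMod α = r ∧ toZMod β = s ∧ toZMod γ = t := by
  obtain ⟨α, hα, rfl⟩ := h.exists_root_toZMod_eq hrs hrt
  obtain ⟨β, hβ, rfl⟩ := h.rotate.exists_root_toZMod_eq hst hrs.symm
  refine ⟨α, β, _, .of_ne hα hβ (ne_of_apply_ne _ hrs), rfl, rfl, ?_⟩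
  rw [map_neg, map_add]
  linear_combination -h.sum_eq

end PadicLifting

section PrimePower

theorem PerrinRoots.pow_dvd_perrin {R : Type*} [CommRing R] [IsDomain R] {p m : ℕ} {α β γ ω : R}
    (h : PerrinRoots α β γ) (hω : IsPrimitiveRoot ω 3) (hp : p.Coprime 3)
    (hα : (p : R) ∣ α ^ m - 1) (hβ : (p : R) ∣ β ^ m - ω) (hγ : (p : R) ∣ γ ^ m - ω ^ 2) (a : ℕ) :
    (p : R) ^ (a + 1) ∣ (perrin (m * p ^ a) : R) := by
  have hsum : 1 + ω ^ p ^ a + (ω ^ 2) ^ p ^ a = 0 := by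
    have := (hω.pow_of_coprime (p ^ a) (hp.pow_left a)).geom_sum_eq_zero (by norm_num)
    rw [Finset.sum_range_succ, Finset.sum_range_succ, Finset.sum_range_one] at this
    linear_combination this
  have hlift := ((dvd_sub_pow_of_dvd_sub hα a).add (dvd_sub_pow_of_dvd_sub hβ a)).add
    (dvd_sub_pow_of_dvd_sub hγ a)
  convert hlift using 1
  rw [h.perrin_eq_sum_pow, pow_mul, pow_mul, pow_mul, one_pow]
  linear_combination hsum

variable {p : ℕ} [Fact p.Prime]

theorem coprime_of_isPrimitiveRoot_zmod {k : ℕ} [NeZero k] {w : ZMod p}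
    (hw : IsPrimitiveRoot w k) : p.Coprime k := by
  have : NeZero (k : ZMod p) := hw.neZero'
  rw [Nat.Prime.coprime_iff_not_dvd Fact.out, ← ZMod.natCast_eq_zero_iff]
  exact this.out

theorem PerrinRoots.prime_pow_dvd_perrin {m : ℕ} {r s t : ZMod p} (h : PerrinRoots r s t)
    (hr : r ^ m = 1) (hs : IsPrimitiveRoot (s ^ m) 3) (a : ℕ) :
    (p : ℤ) ^ (a + 1) ∣ perrin (m * p ^ a) := by
  have ht : t ^ m = (s ^ m) ^ 2 := h.pow_eq_sq hr hs.pow_eq_one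
  have hsq : (s ^ m) ^ 2 ≠ 1 := hs.pow_ne_one_of_pos_of_lt (by norm_num) (by norm_num)
  have hrs : r ≠ s := by
    rintro rfl
    exact hs.ne_one (by norm_num) hr
  have hrt : r ≠ t := by
    rintro rfl
    exact hsq (ht.symm.trans hr)
  have hst : s ≠ t := by
    rintro rfl
    exact hs.ne_one (by norm_num) (by linear_combination hs.pow_eq_one + (1 + s ^ m) * ht)
  obtain ⟨α, β, γ, hroots, rfl, rfl, rfl⟩ := h.exists_toZMod_eq hrs hst hrt
  obtain ⟨ω, hω, hωs⟩ := exists_isPrimitiveRoot_toZMod_eq hs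
  have hα : (p : ℤ_[p]) ∣ α ^ m - 1 := toZMod_eq_iff_dvd_sub.mp (by rw [map_pow, map_one, hr])
  have hβ : (p : ℤ_[p]) ∣ β ^ m - ω := toZMod_eq_iff_dvd_sub.mp (by rw [map_pow, hωs])
  have hγ : (p : ℤ_[p]) ∣ γ ^ m - ω ^ 2 :=
    toZMod_eq_iff_dvd_sub.mp (by rw [map_pow, map_pow, hωs, ht])
  exact (pow_p_dvd_int_iff _ _).mp
    (hroots.pow_dvd_perrin hω (coprime_of_isPrimitiveRoot_zmod hs) hα hβ hγ a)

end PrimePower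

theorem perrin_periodic {R : Type*} [AddGroupWithOne R] {T : ℕ} (h0 : (perrin T : R) = 3)
    (h1 : (perrin (T + 1) : R) = 0) (h2 : (perrin (T + 2) : R) = 2) :
    Function.Periodic (fun n ↦ (perrin n : R)) T
  | 0 => by simp [perrin, h0]
  | 1 => by simp [perrin, add_comm 1 T, h1]
  | 2 => by simp [perrin, add_comm 2 T, h2]
  | n + 3 => by
      have hn := perrin_periodic h0 h1 h2 n
      have hn1 := perrin_periodic h0 h1 h2 (n + 1)
      simp only [add_right_comm _ _ T] at hn hn1 ⊢
      simp only [perrin, Int.cast_add, hn, hn1]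

-- `1368 = 37 ^ 2 - 1`: the cubic `X ^ 3 - X - 1` splits over the field with `37 ^ 2` elements.
theorem perrin_zmod_thirtySeven_periodic :
    Function.Periodic (fun n ↦ (perrin n : ZMod 37)) 1368 :=
  perrin_periodic (by decide +kernel) (by decide +kernel) (by decide +kernel)

theorem thirtySeven_dvd_perrin_mul_pow (k : ℕ) : (37 : ℤ) ∣ perrin (37 * 223 ^ (18 * k)) := by
  have hpow : 223 ^ 18 ≡ 1 [MOD 1368] := by decide
  have hmod : 37 * 223 ^ (18 * k) ≡ 37 [MOD 1368] := by
    simpa only [pow_mul, one_pow, mul_one] using (hpow.pow k).mul_left 37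
  have hperrin : (perrin (37 * 223 ^ (18 * k)) : ZMod 37) = perrin 37 := by
    rw [← perrin_zmod_thirtySeven_periodic.map_mod_nat, hmod]
  rw [← Nat.cast_ofNat, ← ZMod.intCast_zmod_eq_zero_iff_dvd, hperrin]
  decide +kernel

theorem pow_dvd_perrin_thirtySeven_mul_pow (a : ℕ) :
    (223 : ℤ) ^ (a + 1) ∣ perrin (37 * 223 ^ a) := by
  have hroots : PerrinRoots (33 : ZMod 223) 63 127 := ⟨by decide, by decide, by decide⟩
  have hprimitive : IsPrimitiveRoot ((63 : ZMod 223) ^ 37) 3 :=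
    IsPrimitiveRoot.iff_orderOf.mpr (orderOf_eq_prime (by decide +kernel) (by decide +kernel))
  have hpow : (33 : ZMod 223) ^ 37 = 1 := by decide +kernel
  have : Fact (Nat.Prime 223) := ⟨by norm_num⟩
  exact hroots.prime_pow_dvd_perrin hpow hprimitive a

theorem thirtySeven_mul_pow_dvd_perrin (k : ℕ) :
    ((37 * 223 ^ (18 * k) : ℕ) : ℤ) ∣ perrin (37 * 223 ^ (18 * k)) := by
  have hcoprime : IsCoprime (37 : ℤ) (223 ^ (18 * k)) :=
    IsCoprime.pow_right (Int.isCoprime_iff_gcd_eq_one.mpr (by norm_num))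
  push_cast
  exact hcoprime.mul_dvd (thirtySeven_dvd_perrin_mul_pow k)
    ((pow_dvd_pow _ (Nat.le_succ _)).trans (pow_dvd_perrin_thirtySeven_mul_pow _))

/-- There are infinitely many composite numbers `n` (Perrin pseudoprimes) with
`n ∣ P n`. -/
theorem infinitely_many_perrin_pseudoprimes :
    {n : ℕ | 1 < n ∧ ¬ n.Prime ∧ (n : ℤ) ∣ perrin n}.Infinite := by
  refine Set.infinite_of_injective_forall_mem
    (f := fun k : ℕ ↦ 37 * 223 ^ (18 * (k + 1))) ?injective fun k ↦ ⟨?_, ?_, ?_⟩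
  case injective =>
    intro i j hij
    have hexp : 18 * (i + 1) = 18 * (j + 1) := Nat.pow_right_injective (by norm_num : 2 ≤ 223)
      (Nat.mul_left_cancel (by norm_num) hij)
    omega
  · have : 0 < 223 ^ (18 * (k + 1)) := by positivity
    omega
  · exact Nat.not_prime_mul (by norm_num) (Nat.one_lt_pow (by omega) (by norm_num)).ne'
  · exact thirtySeven_mul_pow_dvd_perrin (k + 1)
end

section
/- Let G be a finite abelian group and let m be the maximal order of an element of G (equivalently, the exponent of G). Then every multiset of elements of G whose cardinality is at least m·(1 + log(|G|/m)) contains a nonempty submultiset whose product is the identity. Equivalently, n(G) < m·(1 + log(|G|/m)), where n(G) denotes the length of the longest sequence of (not necessarily distinct) elements of G for which no nonempty subsequence has product equal to the identity. -/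
/-!
Let `m` be the exponent of a finite abelian group `A`, written additively, and let `g` be a family
in `A` no nonempty subfamily of which sums to zero. By orthogonality of characters, the sum over all
`χ` of `∏ i, (c i - χ (g i))` is then `|A| * ∏ i, c i`, so for nonzero `c i` some character
satisfies `χ (g i) ≠ c i` for every `i`.

On the other hand, characters take at most `m` values at each `g i`, so choosing for `c i` the most
frequent value at `g i` among the characters not yet accounted for leaves at most a fraction
`1 - 1 / m` of them. After `m * log (|A| / m)` steps at most `m` characters survive, and `m` further
elements of the family suffice to take care of these one by one.
-/

open Finset

section Covering

variable {ι α β : Type*} [DecidableEq β] {X : Finset α} {I : Finset ι} {m : ℕ}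

theorem exists_card_filter_ne_le [Nonempty α] {f : α → β} (hf : #(X.image f) ≤ m) :
    ∃ y, (#{x ∈ X | f x ≠ f y} : ℝ) ≤ #X * (1 - 1 / m) := by
  obtain rfl | hX := X.eq_empty_or_nonempty
  · simp
  have hm : (0 : ℝ) < m := mod_cast (hX.image f).card_pos.trans_le hf
  have pigeonhole : #(X.image f) • ((#X : ℝ) / m) ≤ #X := by
    rw [nsmul_eq_mul, mul_div_left_comm]
    exact mul_le_of_le_one_right (by positivity) ((div_le_one hm).2 (mod_cast hf))
  obtain ⟨b, hb, hfiber⟩ := exists_le_card_fiber_of_nsmul_le_card_of_maps_to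
    (fun _ ↦ mem_image_of_mem f) (hX.image f) pigeonhole
  obtain ⟨y, -, rfl⟩ := mem_image.1 hb
  have hsplit : (#{x ∈ X | f x = f y} : ℝ) + #{x ∈ X | f x ≠ f y} = #X :=
    mod_cast card_filter_add_card_filter_not (s := X) (f · = f y)
  refine ⟨y, ?_⟩
  rw [mul_one_sub, mul_one_div]
  linarith

theorem exists_card_filter_forall_ne_le [Nonempty α] {f : ι → α → β}
    (hf : ∀ i ∈ I, #(X.image (f i)) ≤ m) :
    ∃ y : ι → α, (#{x ∈ X | ∀ i ∈ I, f i x ≠ f i (y i)} : ℝ) ≤ #X * (1 - 1 / m) ^ #I := by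
  classical
  induction I using Finset.induction_on with
  | empty => simp
  | insert j I hj ih =>
    obtain ⟨hfj, hfI⟩ := (forall_mem_insert ..).1 hf
    obtain ⟨y, hy⟩ := ih hfI
    set Y := {x ∈ X | ∀ i ∈ I, f i x ≠ f i (y i)}
    obtain ⟨z, hz⟩ := exists_card_filter_ne_le (X := Y) (f := f j) (m := m)
      ((card_le_card (image_subset_image (filter_subset _ X))).trans hfj)
    have hupdate : {x ∈ X | ∀ i ∈ insert j I, f i x ≠ f i (Function.update y j z i)} =
        {x ∈ Y | f j x ≠ f j z} := by
      ext x
      have hne : ∀ i ∈ I, i ≠ j := fun i hi ↦ ne_of_mem_of_not_mem hi hj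
      simp +contextual [Y, hne, and_left_comm, and_comm]
    refine ⟨Function.update y j z, ?_⟩
    rw [hupdate, card_insert_of_notMem hj, pow_succ, ← mul_assoc]
    exact hz.trans (mul_le_mul_of_nonneg_right hy (Nat.one_sub_one_div_cast_nonneg m))

theorem exists_subset_image_of_card_le [DecidableEq α] [Nonempty α] (h : #X ≤ #I) :
    ∃ y : ι → α, X ⊆ I.image y := by
  obtain ⟨e⟩ : Nonempty (X ↪ I) := Function.Embedding.nonempty_of_card_le (by simpa using h)
  have he : Function.Injective fun x ↦ (e x : ι) := Subtype.val_injective.comp e.injective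
  refine ⟨Function.extend (fun x ↦ (e x : ι)) Subtype.val fun _ ↦ Classical.arbitrary α, ?_⟩
  exact fun x hx ↦ mem_image.2 ⟨e ⟨x, hx⟩, (e ⟨x, hx⟩).2, he.extend_apply _ _ ⟨x, hx⟩⟩

theorem exists_forall_exists_apply_eq [Nonempty α] {f : ι → α → β}
    (hf : ∀ i ∈ I, #(X.image (f i)) ≤ m) (hm : m ≤ #I)
    (hX : (#X : ℝ) * (1 - 1 / m) ^ (#I - m) ≤ m) :
    ∃ y : ι → α, ∀ x ∈ X, ∃ i ∈ I, f i x = f i (y i) := by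
  classical
  obtain ⟨J, hJI, hJ⟩ := exists_subset_card_eq hm
  obtain ⟨y, hy⟩ := exists_card_filter_forall_ne_le (I := I \ J) fun i hi ↦ hf i (sdiff_subset hi)
  set Y := {x ∈ X | ∀ i ∈ I \ J, f i x ≠ f i (y i)}
  rw [card_sdiff_of_subset hJI, hJ] at hy
  obtain ⟨z, hz⟩ : ∃ z : ι → α, Y ⊆ J.image z :=
    exists_subset_image_of_card_le (hJ ▸ mod_cast hy.trans hX)
  refine ⟨fun i ↦ if i ∈ J then z i else y i, fun x hx ↦ ?_⟩
  by_cases hxY : x ∈ Y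
  · obtain ⟨i, hi, rfl⟩ := mem_image.1 (hz hxY)
    exact ⟨i, hJI hi, by simp [hi]⟩
  · obtain ⟨i, hi, hxi⟩ : ∃ i ∈ I \ J, f i x = f i (y i) := by simpa [Y, hx, and_assoc] using hxY
    exact ⟨i, sdiff_subset hi, by simpa [(mem_sdiff.1 hi).2] using hxi⟩

end Covering

theorem addChar_map_sum_eq_prod {ι A M : Type*} [AddCommMonoid A] [CommMonoid M]
    (χ : AddChar A M) (g : ι → A) (s : Finset ι) : χ (∑ i ∈ s, g i) = ∏ i ∈ s, χ (g i) :=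
  map_prod χ.toMonoidHom (fun i ↦ Multiplicative.ofAdd (g i)) s

theorem card_image_addChar_apply_le {A R : Type*} [AddMonoid A] [CommRing R] [IsDomain R]
    [DecidableEq R] {n : ℕ} {a : A} (hn : n ≠ 0) (ha : n • a = 0) (X : Finset (AddChar A R)) :
    #(X.image (· a)) ≤ n := by
  refine le_trans (card_le_card fun r hr ↦ ?_)
    ((Multiset.toFinset_card_le _).trans (Polynomial.card_nthRoots n (1 : R)))
  obtain ⟨χ, -, rfl⟩ := mem_image.1 hr
  rw [Multiset.mem_toFinset, Polynomial.mem_nthRoots hn.bot_lt, ← AddChar.map_nsmul_eq_pow, ha,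
    AddChar.map_zero_eq_one]

section ZeroSumFree

variable {ι A : Type*} [AddCommGroup A] {I : Finset ι} {g : ι → A}

theorem sum_addChar_prod_sub [Fintype A] (hg : ∀ t ⊆ I, t.Nonempty → ∑ i ∈ t, g i ≠ 0) (c : ι → ℂ) :
    ∑ χ : AddChar A ℂ, ∏ i ∈ I, (c i - χ (g i)) = Fintype.card A * ∏ i ∈ I, c i := by
  classical
  simp_rw [prod_sub, ← addChar_map_sum_eq_prod]
  rw [sum_comm, sum_eq_single_of_mem ∅ (empty_mem_powerset I)]
  · simp
  · intro t ht hne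
    rw [← mul_sum, AddChar.sum_apply_eq_zero_iff_ne_zero.2, mul_zero]
    exact hg t (mem_powerset.1 ht) (nonempty_iff_ne_empty.2 hne)

theorem exists_addChar_forall_apply_ne [Finite A]
    (hg : ∀ t ⊆ I, t.Nonempty → ∑ i ∈ t, g i ≠ 0) {c : ι → ℂ}
    (hc : ∀ i ∈ I, c i ≠ 0) : ∃ χ : AddChar A ℂ, ∀ i ∈ I, χ (g i) ≠ c i := by
  have := Fintype.ofFinite A
  have hsum : ∑ χ : AddChar A ℂ, ∏ i ∈ I, (c i - χ (g i)) ≠ 0 := by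
    rw [sum_addChar_prod_sub hg]
    exact mul_ne_zero (Nat.cast_ne_zero.2 Fintype.card_ne_zero) (prod_ne_zero_iff.2 hc)
  obtain ⟨χ, -, hχ⟩ := exists_ne_zero_of_sum_ne_zero hsum
  exact ⟨χ, fun i hi ↦ (sub_ne_zero.1 (prod_ne_zero_iff.1 hχ i hi)).symm⟩

end ZeroSumFree

theorem mul_one_sub_one_div_pow_le {m N : ℝ} {k : ℕ} (hm : 1 ≤ m) (hN : 0 < N)
    (hk : m * Real.log (N / m) ≤ k) : N * (1 - 1 / m) ^ k ≤ m := by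
  have hm0 : 0 < m := one_pos.trans_le hm
  calc N * (1 - 1 / m) ^ k
      ≤ N * Real.exp (-(1 / m)) ^ k := by
        gcongr
        · exact sub_nonneg.2 ((div_le_one hm0).2 hm)
        · exact Real.one_sub_le_exp_neg _
    _ = N * Real.exp (-(k / m)) := by rw [← Real.exp_nat_mul]; ring_nf
    _ ≤ N * Real.exp (-Real.log (N / m)) := by gcongr; rwa [le_div_iff₀' hm0]
    _ = m := by rw [Real.exp_neg, Real.exp_log (by positivity)]; field_simp

theorem exists_nonempty_subset_sum_eq_zero {ι A : Type*} [AddCommGroup A] [Fintype A]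
    {I : Finset ι} (g : ι → A)
    (hI : AddMonoid.exponent A * (1 + Real.log (Fintype.card A / AddMonoid.exponent A)) ≤ #I) :
    ∃ t ⊆ I, t.Nonempty ∧ ∑ i ∈ t, g i = 0 := by
  set m := AddMonoid.exponent A
  have hm : m ≠ 0 := AddMonoid.exponent_ne_zero_of_finite
  have hm_one : (1 : ℝ) ≤ m := Nat.one_le_cast.2 hm.bot_lt
  have hm_card : (m : ℝ) ≤ Fintype.card A :=
    mod_cast Nat.le_of_dvd Fintype.card_pos AddGroup.exponent_dvd_card
  have hlog : 0 ≤ m * Real.log (Fintype.card A / m) :=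
    mul_nonneg m.cast_nonneg (Real.log_nonneg ((one_le_div (by positivity)).2 hm_card))
  have hmI : m ≤ #I := by
    rw [← Nat.cast_le (α := ℝ)]
    linarith
  have hdecay : (#(univ : Finset (AddChar A ℂ)) : ℝ) * (1 - 1 / m) ^ (#I - m) ≤ m := by
    rw [card_univ, AddChar.card_eq]
    refine mul_one_sub_one_div_pow_le hm_one (by positivity) ?_
    rw [Nat.cast_sub hmI]
    linarith
  obtain ⟨ψ, hψ⟩ := exists_forall_exists_apply_eq (f := fun i (χ : AddChar A ℂ) ↦ χ (g i))
    (fun i _ ↦ card_image_addChar_apply_le hm (AddMonoid.exponent_nsmul_eq_zero (g i)) _)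
    hmI hdecay
  by_contra! hg
  obtain ⟨χ, hχ⟩ := exists_addChar_forall_apply_ne hg (c := fun i ↦ ψ i (g i))
    fun i _ ↦ ((ψ i).val_isUnit (g i)).ne_zero
  obtain ⟨i, hi, h⟩ := hψ χ (mem_univ χ)
  exact hχ i hi h

/-- Theorem of van Emde Boas–Kruyswijk and Meshulam: if `G` is a finite abelian group and
`m` is the maximal order of an element of `G` (i.e. the exponent of `G`), then every
multiset of elements of `G` of cardinality at least `m * (1 + log (|G| / m))` has a
nonempty submultiset whose product is the identity.  Equivalently,
`n(G) < m * (1 + log (|G| / m))`. -/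
theorem davenport_bound (G : Type*) [CommGroup G] [Fintype G] (m : ℕ)
    (hm : m = Monoid.exponent G) (S : Multiset G)
    (hS : (m : ℝ) * (1 + Real.log ((Fintype.card G : ℝ) / (m : ℝ))) ≤ (S.card : ℝ)) :
    ∃ T : Multiset G, T ≤ S ∧ T ≠ 0 ∧ T.prod = 1 := by
  classical
  subst hm
  obtain ⟨t, -, ht, hsum⟩ := exists_nonempty_subset_sum_eq_zero (I := (univ : Finset S.ToType))
    (fun x ↦ Additive.ofMul x.1) (by simpa [AddMonoid.exponent_additive] using hS)
  refine ⟨t.val.map (·.1), ?_, ?_, ?_⟩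
  · exact (Multiset.map_le_map (val_le_iff.2 t.subset_univ)).trans_eq (Multiset.map_univ_coe S)
  · simpa using ht.ne_empty
  · exact Additive.ofMul.injective ((ofMul_prod t _).trans hsum)
end

section
/- Let f ∈ ℤ[X] be a monic polynomial whose splitting field K has degree n over ℚ, and let η ∈ (0, 1). Let x be a real number and suppose there exists an integer q₀ > log x such that for every real y with x^{1/2} < y ≤ x, every positive integer q ≤ x^η with q₀ ∤ q, and every integer a with gcd(a, q) = 1, the number of primes p < y with p ≡ a (mod q) such that f splits into linear factors modulo p is at least π(y)/(2·n·φ(q)). Then, provided x is sufficiently large in terms of K and η, the following holds: for every squarefree positive integer L none of whose prime factors exceeds x^{(1−η)/2} and which satisfies ∑_{q prime, q ∣ L} 1/q ≤ (1−η)/(32n), there exists a positive integer k ≤ x^{1−η} with gcd(k, L) = 1 such that #{d : d ∣ L, dk+1 ≤ x, dk+1 is prime, and f splits into linear factors modulo dk+1} ≥ #{d : d ∣ L, 1 ≤ d ≤ x^η} / (8·n·log x). -/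
/-- The image of `f` in `(ZMod p)[X]` is a product of linear factors. -/
def SplitsModLinear (f : Polynomial ℤ) (p : ℕ) : Prop :=
  ∃ s : Multiset (ZMod p),
    f.map (Int.castRingHom (ZMod p)) =
      (s.map fun a => Polynomial.X - Polynomial.C a).prod

/-- `primePi y` is the number of primes `p ≤ y`. -/
noncomputable def primePi (y : ℝ) : ℕ := {p : ℕ | p.Prime ∧ (p : ℝ) ≤ y}.ncard

/-!
For `d ∣ L` with `d ≤ x ^ η`, the hypothesis at `y = d * x ^ (1 - η)` and `a = 1` yields, by
Chebyshev's lower bound for `π y`, many `k ≤ x ^ (1 - η)` such that `p = d * k + 1` is prime and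
`f` splits modulo `p`. Those sharing a prime `q` with `L` are of the form `k = q * j` with
`d * q * j + 1` prime, and an upper bound sieve together with the smallness of `∑ 1 / q` shows
that they are few. Apart from `k = 1`, the surviving `k` are even since `L` is odd, so there are
at most `x ^ (1 - η) / 2` candidates, and averaging over them produces one `k` that serves many
`d`. Discarding the `d` divisible by `q₀` loses at most half of the divisors, because `d ↦ d / q₀`
maps them injectively to divisors not divisible by `q₀`.

The sieve is a large sieve for Ramanujan sums: the functions `j ↦ c_l (m * j + 1)`, for `l` coprime
to `m`, are almost orthogonal, while `∑ μ(l) / φ(l) * c_l(p)` is large and constant on the primes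
`p` exceeding all `l`. Comparing the two gives the Brun–Titchmarsh bound with any constant
greater than `3`.

When `1 / 2 ≤ η` the hypothesis is contradictory: for an odd `q ≤ √x < 2 * q` with `¬ q₀ ∣ q` there
is no prime `p ≡ 1 (mod q)` below `√x + 1`, as `q + 1` is even and `2 * q + 1` is too large.
-/

/-! ### Almost orthogonality of Ramanujan sums along arithmetic progressions -/

section RamanujanSum

open Finset ArithmeticFunction
open scoped ArithmeticFunction.Moebius ArithmeticFunction.sigma

/-- The Ramanujan sum `c_l(k)`, that is, the sum of the `k`-th powers of the primitive `l`-th roots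
of unity, encoded by its expression as a divisor sum so that it is visibly real. -/
def ramanujanSum (l k : ℕ) : ℝ :=
  ∑ d ∈ l.divisors, (μ (l / d) : ℝ) * if d ∣ k then (d : ℝ) else 0

theorem ramanujanSum_of_coprime {l k : ℕ} (hl : l ≠ 0) (h : l.Coprime k) :
    ramanujanSum l k = μ l := by
  unfold ramanujanSum
  rw [sum_eq_single_of_mem 1 (Nat.one_mem_divisors.2 hl)]
  · simp
  · intro d hd hd1
    rw [if_neg fun hdk => hd1 (Nat.eq_one_of_dvd_coprimes h (Nat.dvd_of_mem_divisors hd) hdk),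
      mul_zero]

theorem sum_moebius_div_mul {f g : ℕ → ℝ} (h : ∀ n > 0, ∑ d ∈ n.divisors, f d = g n) {n : ℕ}
    (hn : n ≠ 0) : ∑ d ∈ n.divisors, (μ (n / d) : ℝ) * g d = f n := by
  rw [← sum_eq_iff_sum_mul_moebius_eq.1 h n (Nat.pos_of_ne_zero hn),
    Nat.sum_divisorsAntidiagonal' fun a b => (μ a : ℝ) * g b]

theorem sum_moebius_div_mul_gcd (d : ℕ) {l : ℕ} (hl : l ≠ 0) :
    ∑ e ∈ l.divisors, (μ (l / e) : ℝ) * (d.gcd e : ℝ) =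
      if l ∣ d then (l.totient : ℝ) else 0 := by
  refine sum_moebius_div_mul (f := fun e => if e ∣ d then (e.totient : ℝ) else 0)
    (fun n hn => ?_) hl
  have hdiv : {e ∈ n.divisors | e ∣ d} = (d.gcd n).divisors := by
    ext e
    simp [Nat.dvd_gcd_iff, hn.ne', and_comm]
  rw [← sum_filter, hdiv, ← Nat.cast_sum, Nat.sum_totient]

theorem sum_moebius_div_mul_dvd (e : ℕ) {l : ℕ} (hl : l ≠ 0) :
    ∑ d ∈ l.divisors, (μ (l / d) : ℝ) * (if e ∣ d then 1 else 0) = if l = e then 1 else 0 :=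
  sum_moebius_div_mul (f := fun d => if d = e then 1 else 0)
    (fun n hn => by simp [sum_ite_eq', hn.ne']) hl

theorem sum_moebius_div_mul_moebius_div_mul_gcd {l l' : ℕ} (hl : l ≠ 0) (hl' : l' ≠ 0) :
    ∑ d ∈ l.divisors, ∑ d' ∈ l'.divisors, (μ (l / d) : ℝ) * μ (l' / d') * (d.gcd d' : ℝ) =
      if l = l' then (l'.totient : ℝ) else 0 := by
  simp_rw [mul_assoc, ← mul_sum, sum_moebius_div_mul_gcd _ hl',
    ← mul_boole _ (l'.totient : ℝ), mul_left_comm _ (l'.totient : ℝ), ← mul_sum,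
    sum_moebius_div_mul_dvd l' hl]

theorem abs_card_Ioc_filter_modEq_sub_div_le {e : ℕ} (he : 0 < e) (N r : ℕ) :
    |(#{j ∈ Ioc 0 N | j ≡ r [MOD e]} : ℝ) - N / e| ≤ 1 := by
  have hmono : ⌊(((0 : ℕ) : ℚ) - r) / e⌋ ≤ ⌊((N : ℚ) - r) / e⌋ := by gcongr; simp
  have hcard := Nat.Ioc_filter_modEq_card 0 N he r
  rw [max_eq_left (by lia)] at hcard
  have hcardQ : (#{j ∈ Ioc 0 N | j ≡ r [MOD e]} : ℚ) =
      ⌊((N : ℚ) - r) / e⌋ - ⌊(((0 : ℕ) : ℚ) - r) / e⌋ := by exact_mod_cast hcard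
  have hdiff : (N : ℚ) / e = (N - r) / e - (((0 : ℕ) : ℚ) - r) / e := by push_cast; ring
  have hQ : |(#{j ∈ Ioc 0 N | j ≡ r [MOD e]} : ℚ) - N / e| ≤ 1 := by
    rw [hcardQ, hdiff, abs_le]
    constructor <;>
      linarith [Int.floor_le (((N : ℚ) - r) / e), Int.lt_floor_add_one (((N : ℚ) - r) / e),
        Int.floor_le ((((0 : ℕ) : ℚ) - r) / e), Int.lt_floor_add_one ((((0 : ℕ) : ℚ) - r) / e)]
  simpa using (Rat.cast_le (K := ℝ)).2 hQ

theorem abs_card_filter_dvd_mul_add_one_sub_div_le {e m : ℕ} (he : 0 < e) (hem : e.Coprime m)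
    (N : ℕ) : |(#{j ∈ Ioc 0 N | e ∣ m * j + 1} : ℝ) - N / e| ≤ 1 := by
  obtain ⟨r, -, hr⟩ := Nat.exists_mul_mod_eq_of_coprime (e - 1) hem.symm he.ne'
  have hr0 : m * r + 1 ≡ 0 [MOD e] :=
    (Nat.ModEq.add_right 1 hr).trans (by rw [Nat.sub_add_cancel he]; simp [Nat.ModEq])
  have hmod (j : ℕ) : e ∣ m * j + 1 ↔ j ≡ r [MOD e] := by
    rw [← Nat.modEq_zero_iff_dvd]
    refine ⟨fun hj => ?_, fun hj => ((hj.mul_left m).add_right 1).trans hr0⟩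
    exact ((hj.trans hr0.symm).add_right_cancel' 1).cancel_left_of_coprime hem
  simpa only [hmod] using abs_card_Ioc_filter_modEq_sub_div_le he N r

theorem ramanujanSum_mul_ramanujanSum (l l' k : ℕ) :
    ramanujanSum l k * ramanujanSum l' k =
      ∑ d ∈ l.divisors, ∑ d' ∈ l'.divisors,
        (μ (l / d) : ℝ) * μ (l' / d') * (d * d') * (if d.lcm d' ∣ k then 1 else 0) := by
  simp_rw [ramanujanSum, sum_mul_sum, Nat.lcm_dvd_iff]
  refine sum_congr rfl fun d _ => sum_congr rfl fun d' _ => ?_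
  by_cases hd : d ∣ k <;> by_cases hd' : d' ∣ k <;> simp [hd, hd', mul_mul_mul_comm]

theorem sum_ramanujanSum_mul_ramanujanSum (m N l l' : ℕ) :
    ∑ j ∈ Ioc 0 N, ramanujanSum l (m * j + 1) * ramanujanSum l' (m * j + 1) =
      ∑ d ∈ l.divisors, ∑ d' ∈ l'.divisors, (μ (l / d) : ℝ) * μ (l' / d') * (d * d') *
        #{j ∈ Ioc 0 N | d.lcm d' ∣ m * j + 1} := by
  simp_rw [ramanujanSum_mul_ramanujanSum, ← sum_boole, mul_sum]
  rw [sum_comm]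
  exact sum_congr rfl fun d _ => sum_comm

theorem abs_moebius_mul_moebius_mul_le (a b : ℕ) {x : ℝ} (hx : 0 ≤ x) :
    |(μ a : ℝ) * μ b * x| ≤ x := by
  have hμ (n : ℕ) : |(μ n : ℝ)| ≤ 1 := mod_cast abs_moebius_le_one (n := n)
  rw [abs_mul, abs_mul, abs_of_nonneg hx]
  exact mul_le_of_le_one_left hx (mul_le_one₀ (hμ a) (abs_nonneg _) (hμ b))

theorem abs_sum_ramanujanSum_mul_sub_le {m l l' : ℕ} (hl : l ≠ 0) (hl' : l' ≠ 0)
    (hlm : l.Coprime m) (hlm' : l'.Coprime m) (N : ℕ) :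
    |∑ j ∈ Ioc 0 N, ramanujanSum l (m * j + 1) * ramanujanSum l' (m * j + 1) -
      N * (if l = l' then (l'.totient : ℝ) else 0)| ≤ σ 1 l * σ 1 l' := by
  rw [sum_ramanujanSum_mul_ramanujanSum, ← sum_moebius_div_mul_moebius_div_mul_gcd hl hl',
    sigma_one_apply, sigma_one_apply, Nat.cast_sum, Nat.cast_sum, sum_mul_sum, mul_sum,
    ← sum_sub_distrib]
  refine (abs_sum_le_sum_abs _ _).trans (sum_le_sum fun d hd => ?_)
  rw [mul_sum, ← sum_sub_distrib]
  refine (abs_sum_le_sum_abs _ _).trans (sum_le_sum fun d' hd' => ?_)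
  have hd0 := Nat.pos_of_mem_divisors hd
  have hd0' := Nat.pos_of_mem_divisors hd'
  have hcop : (d.lcm d').Coprime m :=
    ((hlm.coprime_dvd_left (Nat.dvd_of_mem_divisors hd)).mul_left
      (hlm'.coprime_dvd_left (Nat.dvd_of_mem_divisors hd'))).coprime_dvd_left
      (Nat.lcm_dvd_mul d d')
  have hgcd : (d.gcd d' : ℝ) = d * d' * (1 / (d.lcm d' : ℝ)) := by
    rw [mul_one_div, eq_div_iff (mod_cast (Nat.lcm_pos hd0 hd0').ne')]
    exact_mod_cast Nat.gcd_mul_lcm d d'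
  calc _ = |(μ (l / d) : ℝ) * μ (l' / d') * (d * d')| *
        |(#{j ∈ Ioc 0 N | d.lcm d' ∣ m * j + 1} : ℝ) - N / (d.lcm d' : ℝ)| := by
        rw [← abs_mul, hgcd]; ring_nf
    _ ≤ d * d' * 1 := by
        gcongr
        · exact abs_moebius_mul_moebius_mul_le _ _ (by positivity)
        · exact abs_card_filter_dvd_mul_add_one_sub_div_le (Nat.lcm_pos hd0 hd0') hcop N
    _ = d * d' := mul_one _

theorem sum_sq_sum_mul_ramanujanSum_le {m : ℕ} {s : Finset ℕ} (hs0 : ∀ l ∈ s, l ≠ 0)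
    (hsm : ∀ l ∈ s, l.Coprime m) (N : ℕ) (b : ℕ → ℝ) :
    ∑ j ∈ Ioc 0 N, (∑ l ∈ s, b l * ramanujanSum l (m * j + 1)) ^ 2 ≤
      N * ∑ l ∈ s, b l ^ 2 * l.totient + (∑ l ∈ s, |b l| * σ 1 l) ^ 2 := by
  have hdiag : N * ∑ l ∈ s, b l ^ 2 * (l.totient : ℝ) =
      ∑ l ∈ s, ∑ l' ∈ s, b l * b l' * (N * if l = l' then (l'.totient : ℝ) else 0) := by
    rw [mul_sum]
    refine sum_congr rfl fun l hl => ?_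
    simp only [mul_ite, mul_zero, sum_ite_eq, if_pos hl]
    ring
  have hexp : ∑ j ∈ Ioc 0 N, (∑ l ∈ s, b l * ramanujanSum l (m * j + 1)) ^ 2 =
      ∑ l ∈ s, ∑ l' ∈ s, b l * b l' *
        ∑ j ∈ Ioc 0 N, ramanujanSum l (m * j + 1) * ramanujanSum l' (m * j + 1) := by
    simp_rw [sq, sum_mul_sum, mul_sum, mul_mul_mul_comm]
    rw [sum_comm]
    exact sum_congr rfl fun l _ => sum_comm
  rw [hexp, hdiag, ← sub_le_iff_le_add', ← sum_sub_distrib, sq, sum_mul_sum]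
  refine sum_le_sum fun l hl => ?_
  rw [← sum_sub_distrib]
  refine sum_le_sum fun l' hl' => ?_
  rw [← mul_sub, mul_mul_mul_comm, ← abs_mul]
  refine (le_abs_self _).trans ?_
  rw [abs_mul]
  gcongr
  exact abs_sum_ramanujanSum_mul_sub_le (hs0 l hl) (hs0 l' hl') (hsm l hl) (hsm l' hl') N

end RamanujanSum

/-! ### A sieve bound for primes `m * j + 1` -/

section Sieve

open Finset ArithmeticFunction
open scoped ArithmeticFunction.Moebius ArithmeticFunction.sigma

theorem totient_eq_mul_prod_one_sub_inv (n : ℕ) :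
    (n.totient : ℝ) = n * ∏ p ∈ n.primeFactors, (1 - (p : ℝ)⁻¹) := by
  simpa using congrArg ((↑) : ℚ → ℝ) (Nat.totient_eq_mul_prod_factors n)

theorem prod_one_sub_inv_primeFactors {n : ℕ} (hn : n ≠ 0) :
    ∏ p ∈ n.primeFactors, (1 - (p : ℝ)⁻¹)⁻¹ = n / n.totient := by
  rw [totient_eq_mul_prod_one_sub_inv, prod_inv_distrib,
    div_mul_cancel_left₀ (Nat.cast_ne_zero.2 hn)]

theorem hasSum_inv_factoredNumbers {n : ℕ} (hn : n ≠ 0) :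
    HasSum (fun k : Nat.factoredNumbers n.primeFactors => ((k : ℕ) : ℝ)⁻¹) (n / n.totient) := by
  let invHom : ℕ →* ℝ := (invMonoidWithZeroHom (G₀ := ℝ)).toMonoidHom.comp (Nat.castRingHom ℝ)
  have hlt {p : ℕ} (hp : p.Prime) : ‖invHom p‖ < 1 := by
    have hinv : invHom p = (p : ℝ)⁻¹ := rfl
    rw [hinv, norm_inv, RCLike.norm_natCast]
    exact inv_lt_one_of_one_lt₀ (Nat.one_lt_cast.2 hp.one_lt)
  have hsum := (EulerProduct.summable_and_hasSum_factoredNumbers_prod_filter_prime_geometric hlt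
    n.primeFactors).2
  rw [filter_true_of_mem fun p hp => Nat.prime_of_mem_primeFactors hp] at hsum
  rw [← prod_one_sub_inv_primeFactors hn]
  exact hsum

theorem sum_inv_le_div_totient {n : ℕ} (hn : n ≠ 0) {s : Finset ℕ}
    (hs : ∀ k ∈ s, k ∈ Nat.factoredNumbers n.primeFactors) :
    ∑ k ∈ s, (k : ℝ)⁻¹ ≤ n / n.totient := by
  have hsum : HasSum ((Nat.factoredNumbers n.primeFactors).indicator fun k => (k : ℝ)⁻¹)
      (n / n.totient) := hasSum_subtype_iff_indicator.1 (hasSum_inv_factoredNumbers hn)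
  calc ∑ k ∈ s, (k : ℝ)⁻¹
      = ∑ k ∈ s, (Nat.factoredNumbers n.primeFactors).indicator (fun k => (k : ℝ)⁻¹) k :=
        sum_congr rfl fun k hk => by rw [Set.indicator_of_mem (hs k hk)]
    _ ≤ n / n.totient :=
        sum_le_hasSum s (fun k _ => Set.indicator_nonneg (fun k _ => by positivity) k) hsum

theorem sum_inv_le_of_dvd {l m : ℕ} (hl : l ≠ 0) (hm : m ≠ 0) (hlm : l.Coprime m) {s : Finset ℕ}
    (hs : ∀ n ∈ s, l ∣ n ∧ n ∈ Nat.factoredNumbers (l * m).primeFactors) :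
    ∑ n ∈ s, (n : ℝ)⁻¹ ≤ m / m.totient * (1 / l.totient) := by
  have hquot : ∑ n ∈ s, ((n / l : ℕ) : ℝ)⁻¹ = ∑ k ∈ s.image (· / l), (k : ℝ)⁻¹ :=
    (sum_image (f := fun k : ℕ => (k : ℝ)⁻¹) fun a ha b hb hab =>
      (Nat.div_left_inj (hs a ha).1 (hs b hb).1).1 hab).symm
  have hfact : ∀ k ∈ s.image (· / l), k ∈ Nat.factoredNumbers (l * m).primeFactors := by
    simp only [mem_image, forall_exists_index, and_imp, forall_apply_eq_imp_iff₂]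
    exact fun n hn => Nat.mem_factoredNumbers_of_dvd (hs n hn).2 (Nat.div_dvd_of_dvd (hs n hn).1)
  calc ∑ n ∈ s, (n : ℝ)⁻¹ = (l : ℝ)⁻¹ * ∑ k ∈ s.image (· / l), (k : ℝ)⁻¹ := by
        rw [← hquot, mul_sum]
        refine sum_congr rfl fun n hn => ?_
        rw [← mul_inv, ← Nat.cast_mul, Nat.mul_div_cancel' (hs n hn).1]
    _ ≤ (l : ℝ)⁻¹ * ((l * m : ℕ) / (l * m).totient) := by
        gcongr
        exact sum_inv_le_div_totient (mul_ne_zero hl hm) hfact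
    _ = m / m.totient * (1 / l.totient) := by
        rw [Nat.totient_mul hlm]
        push_cast
        field_simp

/-- The product of the primes that divide `n` but not `m`. -/
def radicalAway (m n : ℕ) : ℕ := ∏ p ∈ n.primeFactors \ m.primeFactors, p

theorem radicalAway_dvd_prod_primeFactors (m n : ℕ) :
    radicalAway m n ∣ ∏ p ∈ n.primeFactors, p :=
  prod_dvd_prod_of_subset _ _ _ sdiff_subset

theorem radicalAway_dvd (m n : ℕ) : radicalAway m n ∣ n :=
  (radicalAway_dvd_prod_primeFactors m n).trans (Nat.prod_primeFactors_dvd n)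

theorem squarefree_radicalAway (m n : ℕ) : Squarefree (radicalAway m n) := by
  refine Squarefree.squarefree_of_dvd (radicalAway_dvd_prod_primeFactors m n) ?_
  rw [← Nat.radical_eq_prod_primeFactors]
  exact UniqueFactorizationMonoid.squarefree_radical

theorem coprime_radicalAway {m : ℕ} (hm : m ≠ 0) (n : ℕ) : (radicalAway m n).Coprime m := by
  refine Nat.Coprime.prod_left fun p hp => ?_
  rw [mem_sdiff] at hp
  have hpp := Nat.prime_of_mem_primeFactors hp.1
  exact hpp.coprime_iff_not_dvd.2 fun hpm => hp.2 (Nat.mem_primeFactors.2 ⟨hpp, hpm, hm⟩)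

theorem mem_factoredNumbers_radicalAway_mul {m n : ℕ} (hm : m ≠ 0) (hn : n ≠ 0) :
    n ∈ Nat.factoredNumbers (radicalAway m n * m).primeFactors := by
  refine Nat.mem_factoredNumbers_of_primeFactors_subset hn fun p hp => ?_
  rw [Nat.primeFactors_mul (squarefree_radicalAway m n).ne_zero hm, mem_union, or_iff_not_imp_right]
  intro hpm
  exact Nat.mem_primeFactors.2 ⟨Nat.prime_of_mem_primeFactors hp,
    dvd_prod_of_mem _ (mem_sdiff.2 ⟨hp, hpm⟩), (squarefree_radicalAway m n).ne_zero⟩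

/-- The support of the sieve of level `z` for the numbers `m * j + 1`: the squarefree `l ≤ z`
coprime to `m`. -/
def sieveModuli (m z : ℕ) : Finset ℕ := {l ∈ Icc 1 z | Squarefree l ∧ l.Coprime m}

theorem mem_sieveModuli {m z l : ℕ} :
    l ∈ sieveModuli m z ↔ l ≤ z ∧ Squarefree l ∧ l.Coprime m := by
  simp only [sieveModuli, mem_filter, mem_Icc]
  exact ⟨fun h => ⟨h.1.2, h.2⟩, fun h => ⟨⟨h.2.1.ne_zero.bot_lt, h.1⟩, h.2⟩⟩

theorem log_add_one_le_sum_sieveModuli {m : ℕ} (hm : m ≠ 0) (z : ℕ) :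
    Real.log (z + 1) ≤ m / m.totient * ∑ l ∈ sieveModuli m z, 1 / (l.totient : ℝ) := by
  have hmaps : ∀ n ∈ Icc 1 z, radicalAway m n ∈ sieveModuli m z := fun n hn =>
    mem_sieveModuli.2 ⟨(Nat.le_of_dvd (mem_Icc.1 hn).1 (radicalAway_dvd m n)).trans
      (mem_Icc.1 hn).2, squarefree_radicalAway m n, coprime_radicalAway hm n⟩
  have hharm : Real.log (z + 1) ≤ ∑ n ∈ Icc 1 z, (n : ℝ)⁻¹ := by
    simpa [harmonic_eq_sum_Icc] using log_add_one_le_harmonic z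
  rw [← sum_fiberwise_of_maps_to hmaps] at hharm
  rw [mul_sum]
  refine hharm.trans (sum_le_sum fun l hl => ?_)
  obtain ⟨-, hsq, hlm⟩ := mem_sieveModuli.1 hl
  refine sum_inv_le_of_dvd hsq.ne_zero hm hlm fun n hn => ?_
  obtain ⟨hn1, hnl⟩ := mem_filter.1 hn
  rw [← hnl]
  exact ⟨radicalAway_dvd m n,
    mem_factoredNumbers_radicalAway_mul hm (Nat.one_le_iff_ne_zero.1 (mem_Icc.1 hn1).1)⟩

theorem sigma_one_eq_prod_primeFactors {l : ℕ} (hl : Squarefree l) :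
    (σ 1 l : ℝ) = ∏ p ∈ l.primeFactors, (1 + p : ℝ) := by
  have h := isMultiplicative_id.prodPrimeFactors_one_add_of_squarefree hl
  simp only [id_apply] at h
  exact_mod_cast (sigma_one_apply l).trans h.symm

theorem totient_eq_prod_primeFactors {l : ℕ} (hl : Squarefree l) :
    (l.totient : ℝ) = ∏ p ∈ l.primeFactors, (p - 1 : ℝ) := by
  conv_lhs => rw [totient_eq_mul_prod_one_sub_inv, ← Nat.prod_primeFactors_of_squarefree hl,
    Nat.cast_prod, Nat.prod_primeFactors_of_squarefree hl, ← prod_mul_distrib]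
  refine prod_congr rfl fun p hp => ?_
  rw [mul_sub, mul_one, mul_inv_cancel₀ (mod_cast (Nat.prime_of_mem_primeFactors hp).ne_zero)]

theorem sqrt_eq_prod_primeFactors {l : ℕ} (hl : Squarefree l) :
    √(l : ℝ) = ∏ p ∈ l.primeFactors, √(p : ℝ) := by
  conv_lhs => rw [← Nat.prod_primeFactors_of_squarefree hl, Nat.cast_prod]
  simp_rw [Real.sqrt_eq_rpow]
  exact (Real.finsetProd_rpow _ _ (fun p _ => by positivity) _).symm

theorem one_add_le_mul_sqrt_mul_sub_one {p : ℝ} (hp : 2 ≤ p) :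
    1 + p ≤ (if p < 4 then 3 else 1) * (√p * (p - 1)) := by
  split_ifs with h4
  · nlinarith [Real.one_le_sqrt.2 (by linarith : 1 ≤ p)]
  · nlinarith [Real.le_sqrt_of_sq_le (by linarith : (2 : ℝ) ^ 2 ≤ p)]

theorem sigma_one_le_mul_sqrt_mul_totient {l : ℕ} (hl : Squarefree l) :
    (σ 1 l : ℝ) ≤ 9 * (√l * l.totient) := by
  have hsmall : #{p ∈ l.primeFactors | p < 4} ≤ #({2, 3} : Finset ℕ) := by
    refine card_le_card fun p hp => ?_
    rw [mem_filter] at hp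
    have := (Nat.prime_of_mem_primeFactors hp.1).two_le
    simp only [mem_insert, mem_singleton]
    lia
  have hprod : ∏ p ∈ l.primeFactors, (if (p : ℝ) < 4 then 3 else 1 : ℝ) ≤ 9 := by
    rw [prod_ite, prod_const_one, mul_one, prod_const]
    exact_mod_cast (pow_le_pow_right₀ (by norm_num) hsmall : 3 ^ _ ≤ 3 ^ 2)
  calc (σ 1 l : ℝ) = ∏ p ∈ l.primeFactors, (1 + p : ℝ) := sigma_one_eq_prod_primeFactors hl
    _ ≤ ∏ p ∈ l.primeFactors, (if (p : ℝ) < 4 then 3 else 1 : ℝ) * (√p * (p - 1)) :=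
        prod_le_prod (fun p _ => by positivity) fun p hp => one_add_le_mul_sqrt_mul_sub_one
          (mod_cast (Nat.prime_of_mem_primeFactors hp).two_le)
    _ = (∏ p ∈ l.primeFactors, (if (p : ℝ) < 4 then 3 else 1 : ℝ)) * (√l * l.totient) := by
        rw [prod_mul_distrib, prod_mul_distrib, sqrt_eq_prod_primeFactors hl,
          totient_eq_prod_primeFactors hl]
    _ ≤ 9 * (√l * l.totient) := by gcongr

theorem sum_sieveModuli_sigma_div_totient_le (m z : ℕ) :
    ∑ l ∈ sieveModuli m z, (σ 1 l : ℝ) / l.totient ≤ 9 * (z * √z) := by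
  have hterm : ∀ l ∈ sieveModuli m z, (σ 1 l : ℝ) / l.totient ≤ 9 * √z := fun l hl => by
    obtain ⟨hlz, hsq, -⟩ := mem_sieveModuli.1 hl
    have hlpos : (0 : ℝ) < l.totient := mod_cast Nat.totient_pos.2 hsq.ne_zero.bot_lt
    rw [div_le_iff₀ hlpos, mul_assoc]
    exact (sigma_one_le_mul_sqrt_mul_totient hsq).trans (by gcongr)
  have hcard : #(sieveModuli m z) ≤ z := (card_filter_le _ _).trans (Nat.card_Icc 1 z).le
  calc _ ≤ #(sieveModuli m z) • (9 * √(z : ℝ)) := sum_le_card_nsmul _ _ _ hterm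
    _ ≤ z * (9 * √(z : ℝ)) := by rw [nsmul_eq_mul]; gcongr
    _ = 9 * (z * √z) := by ring

/-- The `j ≤ N` for which `m * j + 1` is prime. -/
def primeMultipliers (m N : ℕ) : Finset ℕ := {j ∈ Ioc 0 N | (m * j + 1).Prime}

theorem sum_moebius_div_totient_mul_ramanujanSum {m z k : ℕ} (hk : k.Prime) (hzk : z < k) :
    ∑ l ∈ sieveModuli m z, (μ l / l.totient : ℝ) * ramanujanSum l k =
      ∑ l ∈ sieveModuli m z, 1 / (l.totient : ℝ) := by
  refine sum_congr rfl fun l hl => ?_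
  obtain ⟨hlz, hsq, -⟩ := mem_sieveModuli.1 hl
  have hcop : l.Coprime k :=
    (Nat.coprime_of_lt_prime hsq.ne_zero (hlz.trans_lt hzk) hk).symm
  have hμ : (μ l : ℝ) ^ 2 = 1 := mod_cast moebius_sq_eq_one_of_squarefree hsq
  rw [ramanujanSum_of_coprime hsq.ne_zero hcop, div_mul_eq_mul_div, ← sq, hμ]

-- The large sieve with weights `μ(l) / φ(l)`: the weighted sum of `c_l(p)` takes the same large
-- value at every prime `p > z`.
theorem card_filter_prime_gt_mul_sq_le (m N z : ℕ) :
    (#{j ∈ primeMultipliers m N | z < m * j + 1} : ℝ) *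
        (∑ l ∈ sieveModuli m z, 1 / (l.totient : ℝ)) ^ 2 ≤
      N * ∑ l ∈ sieveModuli m z, 1 / (l.totient : ℝ) + 81 * (z : ℝ) ^ 3 := by
  have hsieve := sum_sq_sum_mul_ramanujanSum_le
    (fun l hl => (mem_sieveModuli.1 hl).2.1.ne_zero) (fun l hl => (mem_sieveModuli.1 hl).2.2) N
    (s := sieveModuli m z) (fun l => μ l / l.totient)
  have hdiag : ∑ l ∈ sieveModuli m z, (μ l / l.totient : ℝ) ^ 2 * l.totient =
      ∑ l ∈ sieveModuli m z, 1 / (l.totient : ℝ) := sum_congr rfl fun l hl => by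
    have hμ : (μ l : ℝ) ^ 2 = 1 :=
      mod_cast moebius_sq_eq_one_of_squarefree (mem_sieveModuli.1 hl).2.1
    rw [div_pow, hμ]
    field_simp
  have herr : (∑ l ∈ sieveModuli m z, |(μ l / l.totient : ℝ)| * σ 1 l) ^ 2 ≤ 81 * (z : ℝ) ^ 3 :=
    calc _ ≤ (∑ l ∈ sieveModuli m z, (σ 1 l : ℝ) / l.totient) ^ 2 := by
          gcongr with l
          rw [abs_div, Nat.abs_cast, div_mul_eq_mul_div]
          gcongr
          exact mul_le_of_le_one_left (by positivity) (mod_cast abs_moebius_le_one (n := l))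
      _ ≤ (9 * (z * √z)) ^ 2 := by gcongr; exact sum_sieveModuli_sigma_div_totient_le m z
      _ = 81 * (z : ℝ) ^ 3 := by rw [mul_pow, mul_pow, Real.sq_sqrt z.cast_nonneg]; ring
  rw [hdiag] at hsieve
  calc _ = ∑ j ∈ primeMultipliers m N with z < m * j + 1,
        (∑ l ∈ sieveModuli m z, (μ l / l.totient : ℝ) * ramanujanSum l (m * j + 1)) ^ 2 := by
        rw [← nsmul_eq_mul, ← sum_const]
        refine sum_congr rfl fun j hj => ?_
        simp only [primeMultipliers, mem_filter] at hj
        rw [sum_moebius_div_totient_mul_ramanujanSum hj.1.2 hj.2]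
    _ ≤ ∑ j ∈ Ioc 0 N,
        (∑ l ∈ sieveModuli m z, (μ l / l.totient : ℝ) * ramanujanSum l (m * j + 1)) ^ 2 :=
        sum_le_sum_of_subset_of_nonneg ((filter_subset _ _).trans (filter_subset _ _))
          fun j _ _ => sq_nonneg _
    _ ≤ _ := hsieve.trans (by gcongr)

theorem card_primeMultipliers_le_card_filter_add {m : ℕ} (hm : m ≠ 0) (N z : ℕ) :
    #(primeMultipliers m N) ≤ #{j ∈ primeMultipliers m N | z < m * j + 1} + z := by
  rw [← card_filter_add_card_filter_not (s := primeMultipliers m N) fun j => z < m * j + 1]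
  gcongr
  have hsub : {j ∈ primeMultipliers m N | ¬ z < m * j + 1} ⊆ Ioc 0 z := fun j hj => by
    simp only [primeMultipliers, mem_filter, mem_Ioc] at hj ⊢
    exact ⟨hj.1.1.1, by nlinarith [Nat.pos_of_ne_zero hm]⟩
  simpa using card_le_card hsub

theorem card_primeMultipliers_le {m z : ℕ} (hm : m ≠ 0) (hz : z ≠ 0) (N : ℕ) :
    (#(primeMultipliers m N) : ℝ) ≤
      m / m.totient * (N / Real.log (z + 1)) + 82 * (z : ℝ) ^ 3 := by
  set S := ∑ l ∈ sieveModuli m z, 1 / (l.totient : ℝ) with hS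
  set A : ℕ := #{j ∈ primeMultipliers m N | z < m * j + 1}
  have hz1 : (1 : ℝ) ≤ z := Nat.one_le_cast.2 (Nat.pos_of_ne_zero hz)
  have hS1 : 1 ≤ S := by
    have h1 : 1 ∈ sieveModuli m z := mem_sieveModuli.2 ⟨Nat.pos_of_ne_zero hz, by simp, by simp⟩
    simpa [hS] using single_le_sum (f := fun l : ℕ => 1 / (l.totient : ℝ))
      (fun l _ => by positivity) h1
  have hlog : 0 < Real.log (z + 1) := Real.log_pos (by linarith)
  have hAS : A * S ^ 2 ≤ (N / S + 81 * (z : ℝ) ^ 3) * S ^ 2 :=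
    calc A * S ^ 2 ≤ N * S + 81 * (z : ℝ) ^ 3 * 1 := by
          rw [mul_one]; exact card_filter_prime_gt_mul_sq_le m N z
      _ ≤ N * S + 81 * (z : ℝ) ^ 3 * S ^ 2 := by gcongr; exact one_le_pow₀ hS1
      _ = (N / S + 81 * (z : ℝ) ^ 3) * S ^ 2 := by field_simp
  have hNS : N / S ≤ m / m.totient * (N / Real.log (z + 1)) := by
    rw [div_le_iff₀ (by linarith), mul_right_comm, mul_div_assoc', le_div_iff₀ hlog,
      mul_comm (N : ℝ)]
    gcongr
    exact log_add_one_le_sum_sieveModuli hm z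
  calc (#(primeMultipliers m N) : ℝ) ≤ A + z := mod_cast
        card_primeMultipliers_le_card_filter_add hm N z
    _ ≤ N / S + 81 * (z : ℝ) ^ 3 + (z : ℝ) ^ 3 := by
        gcongr
        · exact le_of_mul_le_mul_right hAS (by positivity)
        · exact le_self_pow₀ hz1 (by norm_num)
    _ ≤ _ := by linarith

end Sieve

section Asymptotics

open Finset Filter Asymptotics

theorem one_le_div_totient {m : ℕ} (hm : m ≠ 0) : (1 : ℝ) ≤ m / m.totient := by
  rw [one_le_div (mod_cast Nat.totient_pos.2 hm.bot_lt)]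
  exact_mod_cast Nat.totient_le m

theorem card_primeMultipliers_floor_le {m : ℕ} (hm : m ≠ 0) {θ Y : ℝ} (hθ : 0 < θ) (hY : 1 < Y) :
    (#(primeMultipliers m ⌊Y⌋₊) : ℝ) ≤
      m / m.totient * (1 / θ * (Y / Real.log Y) + 82 * Y ^ (3 * θ)) := by
  have hlog : 0 < Real.log Y := Real.log_pos hY
  have hz0 : ⌊Y ^ θ⌋₊ ≠ 0 := (Nat.floor_pos.2 (Real.one_le_rpow hY.le hθ.le)).ne'
  have hzlog : θ * Real.log Y ≤ Real.log (⌊Y ^ θ⌋₊ + 1) := by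
    rw [← Real.log_rpow (by linarith)]
    exact Real.log_le_log (by positivity) (Nat.lt_floor_add_one _).le
  have hz3 : (⌊Y ^ θ⌋₊ : ℝ) ^ 3 ≤ Y ^ (3 * θ) :=
    calc (⌊Y ^ θ⌋₊ : ℝ) ^ 3 ≤ (Y ^ θ) ^ 3 := by gcongr; exact Nat.floor_le (by positivity)
      _ = Y ^ (3 * θ) := by rw [← Real.rpow_mul_natCast (by linarith), mul_comm]; norm_cast
  calc (#(primeMultipliers m ⌊Y⌋₊) : ℝ)
      ≤ m / m.totient * (⌊Y⌋₊ / Real.log (⌊Y ^ θ⌋₊ + 1)) + 82 * (⌊Y ^ θ⌋₊ : ℝ) ^ 3 :=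
        card_primeMultipliers_le hm hz0 _
    _ ≤ m / m.totient * (Y / (θ * Real.log Y)) + 82 * Y ^ (3 * θ) := by
        gcongr
        exact Nat.floor_le (by linarith)
    _ ≤ m / m.totient * (Y / (θ * Real.log Y)) + m / m.totient * (82 * Y ^ (3 * θ)) :=
        add_le_add le_rfl (le_mul_of_one_le_left (by positivity) (one_le_div_totient hm))
    _ = _ := by ring

theorem eventually_card_primeMultipliers_le {C : ℝ} (hC : 3 < C) :
    ∀ᶠ Y : ℝ in atTop, ∀ m ≠ 0,
      (#(primeMultipliers m ⌊Y⌋₊) : ℝ) ≤ C * (m / m.totient * (Y / Real.log Y)) := by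
  obtain ⟨θ, hCθ, hθ⟩ : ∃ θ, 1 / C < θ ∧ θ < 1 / 3 :=
    exists_between (one_div_lt_one_div_of_lt (by norm_num) hC)
  have hθ0 : 0 < θ := (by positivity : 0 < 1 / C).trans hCθ
  have hε : 0 < (C - 1 / θ) / 82 := by
    have := one_div_lt (by linarith) hθ0 |>.1 hCθ
    linarith
  filter_upwards [eventually_gt_atTop 1,
    (isLittleO_log_rpow_atTop (show 0 < 1 - 3 * θ by linarith)).bound hε] with Y hY hlogY m hm
  have hlog : 0 < Real.log Y := Real.log_pos hY
  have hY0 : 0 < Y := by linarith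
  rw [Real.norm_of_nonneg hlog.le, Real.norm_of_nonneg (by positivity)] at hlogY
  have herr : 82 * Y ^ (3 * θ) ≤ (C - 1 / θ) * (Y / Real.log Y) := by
    rw [mul_div_assoc', le_div_iff₀ hlog]
    calc 82 * Y ^ (3 * θ) * Real.log Y
        ≤ 82 * Y ^ (3 * θ) * ((C - 1 / θ) / 82 * Y ^ (1 - 3 * θ)) := by gcongr
      _ = (C - 1 / θ) * (Y ^ (3 * θ) * Y ^ (1 - 3 * θ)) := by ring
      _ = (C - 1 / θ) * Y := by rw [← Real.rpow_add hY0, add_sub_cancel, Real.rpow_one]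
  calc (#(primeMultipliers m ⌊Y⌋₊) : ℝ)
      ≤ m / m.totient * (1 / θ * (Y / Real.log Y) + 82 * Y ^ (3 * θ)) :=
        card_primeMultipliers_floor_le hm hθ0 hY
    _ ≤ m / m.totient * (1 / θ * (Y / Real.log Y) + (C - 1 / θ) * (Y / Real.log Y)) := by gcongr
    _ = C * (m / m.totient * (Y / Real.log Y)) := by ring

theorem primePi_eq_primeCounting_floor {y : ℝ} (hy : 0 ≤ y) :
    primePi y = Nat.primeCounting ⌊y⌋₊ := by
  rw [← Nat.primesLE_card_eq_primeCounting, ← Set.ncard_coe_finset, primePi]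
  congr 1
  ext p
  simp [Nat.mem_primesLE, Nat.le_floor_iff hy, and_comm]

theorem eventually_mul_div_log_le_primePi {c : ℝ} (hc : c < Real.log 2) :
    ∀ᶠ y : ℝ in atTop, c * (y / Real.log y) ≤ primePi y := by
  have hδ : 0 < (Real.log 2 - c) / 2 := by linarith
  filter_upwards [Real.isLittleO_log_id_atTop.bound hδ, eventually_ge_atTop 2,
    eventually_ge_atTop (2 * Real.log 2 / ((Real.log 2 - c) / 2))] with y hlogy hy2 hy
  have hlog : 0 < Real.log y := Real.log_pos (by linarith)
  rw [id, Real.norm_of_nonneg hlog.le, Real.norm_of_nonneg (by linarith)] at hlogy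
  rw [div_le_iff₀ hδ] at hy
  have hlog2 : Real.log (y + 2) ≤ Real.log 2 + Real.log y := by
    rw [← Real.log_mul (by norm_num) (by linarith)]
    exact Real.log_le_log (by linarith) (by linarith)
  rw [primePi_eq_primeCounting_floor (by linarith), mul_div_assoc']
  refine le_trans ?_ (Chebyshev.pi_ge' (by linarith))
  gcongr
  linarith

end Asymptotics

/-! ### Multipliers `k` making `d * k + 1` a good prime -/

section Multipliers

open Finset Filter

/-- The hypothesis on primes in arithmetic progressions, restricted to the residue class `1` and for
an arbitrary property `P` of primes: `q₀` is the possible exceptional modulus and `1 / n` is the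
expected density of `P`. -/
def HasManyPrimesOneMod (P : ℕ → Prop) (n η x : ℝ) (q₀ : ℕ) : Prop :=
  ∀ y : ℝ, x ^ ((1 : ℝ) / 2) < y → y ≤ x → ∀ q : ℕ, 0 < q → (q : ℝ) ≤ x ^ η → ¬ q₀ ∣ q →
    (primePi y : ℝ) / (2 * n * q.totient) ≤
      ({p : ℕ | p.Prime ∧ (p : ℝ) < y ∧ (p : ℤ) ≡ 1 [ZMOD q] ∧ P p}.ncard : ℝ)

theorem exists_eq_mul_add_one {p d : ℕ} (hp : p.Prime) (h : (p : ℤ) ≡ 1 [ZMOD d]) :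
    ∃ k, 0 < k ∧ p = d * k + 1 := by
  have hmod : 1 ≡ p [MOD d] := by
    rw [← Int.natCast_modEq_iff]
    exact_mod_cast h.symm
  obtain ⟨k, hk⟩ := (Nat.modEq_iff_dvd' hp.one_lt.le).1 hmod
  have hp1 := hp.one_lt
  refine ⟨k, Nat.pos_of_ne_zero ?_, by lia⟩
  rintro rfl
  lia

theorem even_of_prime_mul_add_one {d k : ℕ} (hd : Odd d) (hk : k ≠ 1)
    (hp : (d * k + 1).Prime) : Even k := by
  by_contra hodd
  have htwo := hp.even_iff.1 (hd.mul (Nat.not_even_iff_odd.1 hodd)).add_one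
  exact hk (Nat.eq_one_of_mul_eq_one_left (by lia : d * k = 1))

theorem exists_mem_primeMultipliers_of_not_coprime {d k L : ℕ} {X : ℝ} (hL : L ≠ 0) (hk : 0 < k)
    (hkX : (k : ℝ) ≤ X) (hp : (d * k + 1).Prime) (hkL : ¬ k.Coprime L) :
    ∃ q ∈ L.primeFactors, ∃ j ∈ primeMultipliers (d * q) ⌊X / q⌋₊, q * j = k := by
  obtain ⟨q, hq, ⟨j, rfl⟩, hqL⟩ := Nat.Prime.not_coprime_iff_dvd.1 hkL
  refine ⟨q, Nat.mem_primeFactors.2 ⟨hq, hqL, hL⟩, j, ?_, rfl⟩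
  simp only [primeMultipliers, mem_filter, mem_Ioc, mul_assoc]
  refine ⟨⟨Nat.pos_of_mul_pos_left hk, Nat.le_floor ?_⟩, hp⟩
  rw [le_div_iff₀ (mod_cast hq.pos), mul_comm]
  exact_mod_cast hkX

/-- The even `k ≤ X` coprime to `L`. For odd `d > 1` only even `k` can make `d * k + 1` prime, and
restricting to them gains the factor `2` that the final pigeonhole needs. -/
noncomputable def evenCoprimeMultipliers (L : ℕ) (X : ℝ) : Finset ℕ :=
  {k ∈ Ioc 0 ⌊X⌋₊ | Even k ∧ k.Coprime L}

open Classical in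
/-- The even `k ≤ X` coprime to `L` for which `d * k + 1 ≤ d * X` is a prime satisfying `P`. -/
noncomputable def goodMultipliers (P : ℕ → Prop) (L : ℕ) (X : ℝ) (d : ℕ) : Finset ℕ :=
  {k ∈ evenCoprimeMultipliers L X |
    ((d * k + 1 : ℕ) : ℝ) ≤ d * X ∧ (d * k + 1).Prime ∧ P (d * k + 1)}

theorem card_evenCoprimeMultipliers_le (L : ℕ) {X : ℝ} (hX : 0 ≤ X) :
    (#(evenCoprimeMultipliers L X) : ℝ) ≤ X / 2 := by
  have hsub : evenCoprimeMultipliers L X ⊆ {k ∈ Ioc 0 ⌊X⌋₊ | 2 ∣ k} := fun k hk => by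
    simp only [evenCoprimeMultipliers, mem_filter, even_iff_two_dvd] at hk ⊢
    exact ⟨hk.1, hk.2.1⟩
  calc (#(evenCoprimeMultipliers L X) : ℝ) ≤ (⌊X⌋₊ / 2 : ℕ) := by
        exact_mod_cast (card_le_card hsub).trans (Nat.Ioc_filter_dvd_card_eq_div _ _).le
    _ ≤ (⌊X⌋₊ : ℝ) / 2 := Nat.cast_div_le
    _ ≤ X / 2 := by gcongr; exact Nat.floor_le hX

variable {P : ℕ → Prop} {n η x X : ℝ} {L d q₀ : ℕ}

theorem setOf_prime_subset_image (hL : Odd L) (hd : d ∣ L) :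
    {p : ℕ | p.Prime ∧ (p : ℝ) < d * X ∧ (p : ℤ) ≡ 1 [ZMOD d] ∧ P p} ⊆
      (((goodMultipliers P L X d ∪ L.primeFactors.biUnion fun q =>
        (primeMultipliers (d * q) ⌊X / q⌋₊).image (q * ·)) ∪ {1}).image (d * · + 1) :
          Finset ℕ) := by
  rintro p ⟨hp, hpX, hmod, hP⟩
  obtain ⟨k, hk, rfl⟩ := exists_eq_mul_add_one hp hmod
  refine mem_coe.2 (mem_image_of_mem _ ?_)
  have hkX : (k : ℝ) ≤ X := by
    push_cast at hpX
    exact le_of_mul_le_mul_left (by linarith : (d : ℝ) * k ≤ d * X)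
      (mod_cast Nat.pos_of_dvd_of_pos hd hL.pos)
  simp only [mem_union, mem_singleton, mem_biUnion, mem_image]
  by_cases hk1 : k = 1
  · exact Or.inr hk1
  by_cases hkL : k.Coprime L
  · refine Or.inl (Or.inl ?_)
    simp only [goodMultipliers, evenCoprimeMultipliers, mem_filter, mem_Ioc]
    exact ⟨⟨⟨hk, Nat.le_floor hkX⟩,
      even_of_prime_mul_add_one (hL.of_dvd_nat hd) hk1 hp, hkL⟩, hpX.le, hp, hP⟩
  · exact Or.inl (Or.inr
      (exists_mem_primeMultipliers_of_not_coprime hL.pos.ne' hk hkX hp hkL))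

theorem ncard_prime_le_card_goodMultipliers_add (hL : Odd L) (hd : d ∣ L) :
    {p : ℕ | p.Prime ∧ (p : ℝ) < d * X ∧ (p : ℤ) ≡ 1 [ZMOD d] ∧ P p}.ncard ≤
      #(goodMultipliers P L X d) +
        ∑ q ∈ L.primeFactors, #(primeMultipliers (d * q) ⌊X / q⌋₊) + 1 := by
  refine (Set.ncard_le_ncard (setOf_prime_subset_image hL hd) (finite_toSet _)).trans ?_
  rw [Set.ncard_coe_finset]
  refine card_image_le.trans ((card_union_le _ _).trans ?_)
  rw [card_singleton]
  gcongr
  refine (card_union_le _ _).trans ?_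
  gcongr
  exact card_biUnion_le.trans (sum_le_sum fun q _ => card_image_le)

theorem thirtyTwo_le_of_mem_primeFactors (hn : 1 ≤ n) (hη : 0 < η)
    (hsum : ∑ q ∈ L.primeFactors, 1 / (q : ℝ) ≤ (1 - η) / (32 * n)) {q : ℕ}
    (hq : q ∈ L.primeFactors) : 32 ≤ q := by
  have hn0 : 0 < n := one_pos.trans_le hn
  have hle : 1 / (q : ℝ) ≤ 1 / 32 :=
    calc 1 / (q : ℝ) ≤ ∑ q ∈ L.primeFactors, 1 / (q : ℝ) :=
          single_le_sum (f := fun q : ℕ => 1 / (q : ℝ)) (fun _ _ => by positivity) hq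
      _ ≤ (1 - η) / (32 * n) := hsum
      _ ≤ 1 / 32 := by
          rw [div_le_div_iff₀ (mul_pos (by norm_num) hn0) (by norm_num)]
          linarith
  exact_mod_cast (one_div_le_one_div (mod_cast Nat.pos_of_mem_primeFactors hq) (by norm_num)).1 hle

/-- The lower bounds on `x`, in terms of `n` and `η`, under which the argument works. The constants
`11/16 < log 2` (Chebyshev) and `10/3 > 3` (sieve) are chosen so that
`(11/16) / 2 - (10/3) * (32/31) * (2/32) - 1/300 > 1/8`. -/
structure SufficientlyLarge (n η x : ℝ) : Prop where
  one_lt : 1 < x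
  log_le : 300 * n * Real.log x ≤ x ^ (1 - η)
  le_primePi : ∀ y ≥ x ^ (1 - η), 11 / 16 * (y / Real.log y) ≤ primePi y
  card_primeMultipliers_le : ∀ Y ≥ x ^ ((1 - η) / 2), ∀ m ≠ 0,
    (#(primeMultipliers m ⌊Y⌋₊) : ℝ) ≤ 10 / 3 * (m / m.totient * (Y / Real.log Y))

theorem eventually_sufficientlyLarge (n : ℝ) (hη : η < 1) :
    ∀ᶠ x in atTop, SufficientlyLarge n η x := by
  have hlog : ∀ᶠ x : ℝ in atTop, 300 * n * Real.log x ≤ x ^ (1 - η) := by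
    filter_upwards [((isLittleO_log_rpow_atTop (sub_pos.2 hη)).const_mul_left (300 * n)).bound
      one_pos, eventually_ge_atTop 0] with x hx hx0
    rw [one_mul, Real.norm_of_nonneg (Real.rpow_nonneg hx0 _)] at hx
    exact (Real.le_norm_self _).trans hx
  have hpi := eventually_mul_div_log_le_primePi (c := 11 / 16)
    (by linarith [Real.log_two_gt_d9])
  have hsieve := eventually_card_primeMultipliers_le (C := 10 / 3) (by norm_num)
  filter_upwards [eventually_gt_atTop 1, hlog,
    (tendsto_rpow_atTop (sub_pos.2 hη)).eventually (eventually_forall_ge_atTop.2 hpi),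
    (tendsto_rpow_atTop (half_pos (sub_pos.2 hη))).eventually
      (eventually_forall_ge_atTop.2 hsieve)]
    with x h1 h2 h3 h4
  exact ⟨h1, h2, h3, h4⟩

theorem mul_div_totient_le {d q : ℕ} (hq : q.Prime) (hq32 : 32 ≤ q) :
    ((d * q : ℕ) : ℝ) / (d * q).totient ≤ 32 / 31 * (d / d.totient) := by
  rcases d.eq_zero_or_pos with rfl | hd
  · simp
  have hq' : (32 : ℝ) ≤ q := mod_cast hq32
  have htot : (d.totient : ℝ) * (q - 1) ≤ (d * q).totient := by
    have h := Nat.totient_super_multiplicative d q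
    rw [Nat.totient_prime hq] at h
    rw [← Nat.cast_pred hq.pos]
    exact_mod_cast h
  have hdpos : (0 : ℝ) < d.totient := mod_cast Nat.totient_pos.2 hd
  calc ((d * q : ℕ) : ℝ) / (d * q).totient ≤ (d * q) / (d.totient * (q - 1)) := by
        push_cast
        gcongr
        exact mul_pos hdpos (by linarith)
    _ = q / (q - 1) * (d / d.totient) := by rw [mul_div_mul_comm, mul_comm]
    _ ≤ 32 / 31 * (d / d.totient) := by
        refine mul_le_mul_of_nonneg_right ?_ (by positivity)
        rw [div_le_div_iff₀] <;> linarith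

theorem SufficientlyLarge.card_primeMultipliers_mul_le (hx : SufficientlyLarge n η x) (hη : η < 1)
    (hd : d ≠ 0) {q : ℕ} (hq : q.Prime) (hq32 : 32 ≤ q) (hqx : (q : ℝ) ≤ x ^ ((1 - η) / 2)) :
    (#(primeMultipliers (d * q) ⌊x ^ (1 - η) / q⌋₊) : ℝ) ≤
      640 / 93 / (1 - η) * (d / d.totient * (x ^ (1 - η) / Real.log x)) * (1 / q) := by
  have hx0 : 0 < x := one_pos.trans hx.one_lt
  have hq0 : (0 : ℝ) < q := mod_cast hq.pos
  have hlog : 0 < Real.log x := Real.log_pos hx.one_lt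
  have hη' : 0 < 1 - η := sub_pos.2 hη
  have hY : x ^ ((1 - η) / 2) ≤ x ^ (1 - η) / q := by
    rw [le_div_iff₀ hq0]
    calc x ^ ((1 - η) / 2) * q ≤ x ^ ((1 - η) / 2) * x ^ ((1 - η) / 2) := by gcongr
      _ = x ^ (1 - η) := by rw [← Real.rpow_add hx0, add_halves]
  have hlogY : (1 - η) / 2 * Real.log x ≤ Real.log (x ^ (1 - η) / q) := by
    rw [← Real.log_rpow hx0]
    exact Real.log_le_log (by positivity) hY
  have hlogY0 : 0 < Real.log (x ^ (1 - η) / q) := lt_of_lt_of_le (by positivity) hlogY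
  calc (#(primeMultipliers (d * q) ⌊x ^ (1 - η) / q⌋₊) : ℝ)
      ≤ 10 / 3 * ((d * q : ℕ) / (d * q).totient *
          (x ^ (1 - η) / q / Real.log (x ^ (1 - η) / q))) :=
        hx.card_primeMultipliers_le _ hY _ (mul_ne_zero hd hq.ne_zero)
    _ ≤ 10 / 3 * (32 / 31 * (d / d.totient) *
          (x ^ (1 - η) / q / ((1 - η) / 2 * Real.log x))) := by
        gcongr
        exact mul_div_totient_le hq hq32
    _ = _ := by field_simp; norm_num

theorem SufficientlyLarge.sum_card_primeMultipliers_le (hx : SufficientlyLarge n η x) (hη : η < 1)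
    (hd : d ≠ 0) (hL32 : ∀ q ∈ L.primeFactors, 32 ≤ q)
    (hLx : ∀ q ∈ L.primeFactors, (q : ℝ) ≤ x ^ ((1 - η) / 2))
    (hsum : ∑ q ∈ L.primeFactors, 1 / (q : ℝ) ≤ (1 - η) / (32 * n)) :
    ((∑ q ∈ L.primeFactors, #(primeMultipliers (d * q) ⌊x ^ (1 - η) / q⌋₊) : ℕ) : ℝ) ≤
      20 / 93 * (d / d.totient * (x ^ (1 - η) / Real.log x)) / n := by
  have hx0 : 0 < x := one_pos.trans hx.one_lt
  have hlog : 0 < Real.log x := Real.log_pos hx.one_lt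
  have hη' : 0 < 1 - η := sub_pos.2 hη
  set V := d / d.totient * (x ^ (1 - η) / Real.log x)
  push_cast
  calc ∑ q ∈ L.primeFactors, (#(primeMultipliers (d * q) ⌊x ^ (1 - η) / q⌋₊) : ℝ)
      ≤ ∑ q ∈ L.primeFactors, 640 / 93 / (1 - η) * V * (1 / q) :=
        sum_le_sum fun q hq => hx.card_primeMultipliers_mul_le hη hd
          (Nat.prime_of_mem_primeFactors hq) (hL32 q hq) (hLx q hq)
    _ = 640 / 93 / (1 - η) * V * ∑ q ∈ L.primeFactors, 1 / (q : ℝ) := by rw [mul_sum]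
    _ ≤ 640 / 93 / (1 - η) * V * ((1 - η) / (32 * n)) := by gcongr
    _ = 20 / 93 * V / n := by field_simp; ring

theorem mul_rpow_one_sub_le {b : ℝ} (hx : 0 < x) (hb : b ≤ x ^ η) : b * x ^ (1 - η) ≤ x :=
  calc b * x ^ (1 - η) ≤ x ^ η * x ^ (1 - η) := by gcongr
    _ = x := by rw [← Real.rpow_add hx, add_sub_cancel, Real.rpow_one]

theorem SufficientlyLarge.le_ncard_prime (hx : SufficientlyLarge n η x) (hn : 0 < n)
    (hη : η < 1 / 2) (H : HasManyPrimesOneMod P n η x q₀) (hd : 0 < d) (hdx : (d : ℝ) ≤ x ^ η)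
    (hq₀ : ¬ q₀ ∣ d) :
    11 / 32 * (d / d.totient * (x ^ (1 - η) / Real.log x)) / n ≤
      ({p : ℕ | p.Prime ∧ (p : ℝ) < d * x ^ (1 - η) ∧ (p : ℤ) ≡ 1 [ZMOD d] ∧ P p}.ncard : ℝ) := by
  have hx0 : 0 < x := one_pos.trans hx.one_lt
  have hd1 : (1 : ℝ) ≤ d := mod_cast hd
  have hXy : x ^ (1 - η) ≤ d * x ^ (1 - η) := le_mul_of_one_le_left (by positivity) hd1
  have hyx : d * x ^ (1 - η) ≤ x := mul_rpow_one_sub_le hx0 hdx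
  have hsqrt : x ^ ((1 : ℝ) / 2) < d * x ^ (1 - η) :=
    (Real.rpow_lt_rpow_of_exponent_lt hx.one_lt (by linarith)).trans_le hXy
  have hlogy : 0 < Real.log (d * x ^ (1 - η)) :=
    Real.log_pos ((Real.one_lt_rpow hx.one_lt (by norm_num)).trans hsqrt)
  calc 11 / 32 * (d / d.totient * (x ^ (1 - η) / Real.log x)) / n
      = 11 / 16 * (d * x ^ (1 - η) / Real.log x) / (2 * n * d.totient) := by field_simp; norm_num
    _ ≤ 11 / 16 * (d * x ^ (1 - η) / Real.log (d * x ^ (1 - η))) / (2 * n * d.totient) := by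
        gcongr
    _ ≤ primePi (d * x ^ (1 - η)) / (2 * n * d.totient) := by
        gcongr
        exact hx.le_primePi _ hXy
    _ ≤ _ := H _ hsqrt hyx d hd hdx hq₀

theorem SufficientlyLarge.le_card_goodMultipliers (hx : SufficientlyLarge n η x) (hn : 0 < n)
    (hη : η < 1 / 2) (H : HasManyPrimesOneMod P n η x q₀) (hL : L ≠ 0)
    (hL32 : ∀ q ∈ L.primeFactors, 32 ≤ q)
    (hLx : ∀ q ∈ L.primeFactors, (q : ℝ) ≤ x ^ ((1 - η) / 2))
    (hsum : ∑ q ∈ L.primeFactors, 1 / (q : ℝ) ≤ (1 - η) / (32 * n))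
    (hdL : d ∣ L) (hdx : (d : ℝ) ≤ x ^ η) (hq₀ : ¬ q₀ ∣ d) :
    x ^ (1 - η) / (8 * n * Real.log x) ≤ #(goodMultipliers P L (x ^ (1 - η)) d) := by
  have hx0 : 0 < x := one_pos.trans hx.one_lt
  have hlog : 0 < Real.log x := Real.log_pos hx.one_lt
  have hd : 0 < d := Nat.pos_of_dvd_of_pos hdL hL.bot_lt
  have hodd : Odd L := Nat.not_even_iff_odd.1 fun h => absurd
    (hL32 2 (Nat.mem_primeFactors.2 ⟨Nat.prime_two, even_iff_two_dvd.1 h, hL⟩)) (by norm_num)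
  have hmany := (hx.le_ncard_prime hn hη H hd hdx hq₀).trans
    (Nat.cast_le.2 (ncard_prime_le_card_goodMultipliers_add hodd hdL))
  rw [Nat.cast_add, Nat.cast_add, Nat.cast_one] at hmany
  have hbad := hx.sum_card_primeMultipliers_le (by linarith) hd.ne' hL32 hLx hsum
  have hV : x ^ (1 - η) / Real.log x ≤ d / d.totient * (x ^ (1 - η) / Real.log x) :=
    le_mul_of_one_le_left (by positivity) (one_le_div_totient hd.ne')
  set V := d / d.totient * (x ^ (1 - η) / Real.log x)
  have hone : 300 * n ≤ V := ((le_div_iff₀ hlog).2 hx.log_le).trans hV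
  calc x ^ (1 - η) / (8 * n * Real.log x) = x ^ (1 - η) / Real.log x / (8 * n) := by
        rw [div_div, mul_comm (Real.log x)]
    _ ≤ V / (8 * n) := by gcongr
    _ ≤ (11 / 32 * V - 20 / 93 * V - n) / n := by
        rw [div_le_div_iff₀ (by positivity) hn]
        nlinarith [mul_le_mul_of_nonneg_right hone hn.le]
    _ = 11 / 32 * V / n - 20 / 93 * V / n - 1 := by field_simp
    _ ≤ #(goodMultipliers P L (x ^ (1 - η)) d) := by linarith

theorem exists_mem_evenCoprimeMultipliers_le_card {s : Finset ℕ} {c : ℝ} (hs : s.Nonempty)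
    (hc : 0 < c) (hX : 0 < X) (hgood : ∀ d ∈ s, c * X ≤ #(goodMultipliers P L X d)) :
    ∃ k ∈ evenCoprimeMultipliers L X, 2 * c * #s ≤ #{d ∈ s | k ∈ goodMultipliers P L X d} := by
  classical
  obtain ⟨d, hd⟩ := hs
  obtain ⟨k, hk⟩ : (goodMultipliers P L X d).Nonempty :=
    card_pos.1 (Nat.cast_pos.1 ((mul_pos hc hX).trans_le (hgood d hd)))
  have hne : (evenCoprimeMultipliers L X).Nonempty := ⟨k, (mem_filter.1 hk).1⟩
  have habove : ∀ d, bipartiteAbove (fun d k => k ∈ goodMultipliers P L X d)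
      (evenCoprimeMultipliers L X) d = goodMultipliers P L X d := fun d =>
    filter_mem_eq_inter.trans (inter_eq_right.2 (filter_subset _ _))
  by_contra! hfew
  have hlt := card_nsmul_lt_card_nsmul_of_le_of_lt
    (fun d k => k ∈ goodMultipliers P L X d) hne (fun d hd => by rw [habove]; exact hgood d hd) hfew
  rw [nsmul_eq_mul, nsmul_eq_mul] at hlt
  have hcard := card_evenCoprimeMultipliers_le L hX.le
  nlinarith [mul_le_mul_of_nonneg_right hcard (by positivity : 0 ≤ 2 * c * #s)]

theorem card_le_two_mul_card_filter_not_dvd {S : Finset ℕ} (hsq : ∀ d ∈ S, Squarefree d)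
    (hdvd : ∀ d ∈ S, ∀ e, e ∣ d → e ∈ S) (hq₀ : 1 < q₀) :
    #S ≤ 2 * #{d ∈ S | ¬ q₀ ∣ d} := by
  have hinj : #{d ∈ S | q₀ ∣ d} ≤ #{d ∈ S | ¬ q₀ ∣ d} := by
    refine card_le_card_of_injOn (· / q₀) (fun d hd => ?_) fun a ha b hb hab =>
      (Nat.div_left_inj (mem_filter.1 ha).2 (mem_filter.1 hb).2).1 hab
    obtain ⟨hdS, hd⟩ := mem_filter.1 hd
    refine mem_filter.2 ⟨hdvd d hdS _ (Nat.div_dvd_of_dvd hd), fun h => hq₀.ne' ?_⟩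
    exact Nat.isUnit_iff.1 (hsq d hdS q₀ (Nat.mul_dvd_of_dvd_div hd h))
  have hsplit := card_filter_add_card_filter_not (s := S) (q₀ ∣ ·)
  lia

/-- The divisors of `L` that are at most `B`. -/
noncomputable def smallDivisors (L : ℕ) (B : ℝ) : Finset ℕ :=
  {d ∈ L.divisors | (d : ℝ) ≤ B}

theorem mem_smallDivisors {B : ℝ} (hL : L ≠ 0) : d ∈ smallDivisors L B ↔ d ∣ L ∧ (d : ℝ) ≤ B := by
  simp [smallDivisors, hL]

theorem ncard_setOf_dvd_eq_card_smallDivisors {B : ℝ} (hL : L ≠ 0) :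
    {d : ℕ | d ∣ L ∧ 1 ≤ d ∧ (d : ℝ) ≤ B}.ncard = #(smallDivisors L B) := by
  rw [← Set.ncard_coe_finset]
  congr 1
  ext d
  rw [mem_coe, mem_smallDivisors hL]
  exact ⟨fun h => ⟨h.1, h.2.2⟩, fun h => ⟨h.1, Nat.pos_of_dvd_of_pos h.1 hL.bot_lt, h.2⟩⟩

theorem card_filter_mem_goodMultipliers_le_ncard {k : ℕ} (hx : 0 < x) (hL : L ≠ 0) :
    #{d ∈ smallDivisors L (x ^ η) | k ∈ goodMultipliers P L (x ^ (1 - η)) d} ≤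
      {d : ℕ | d ∣ L ∧ ((d * k + 1 : ℕ) : ℝ) ≤ x ∧ (d * k + 1).Prime ∧ P (d * k + 1)}.ncard := by
  rw [← Set.ncard_coe_finset]
  refine Set.ncard_le_ncard (fun d hd => ?_)
    (L.divisors.finite_toSet.subset fun d hd => Nat.mem_divisors.2 ⟨hd.1, hL⟩)
  obtain ⟨hdS, hdk⟩ := mem_filter.1 (mem_coe.1 hd)
  obtain ⟨hdL, hdx⟩ := (mem_smallDivisors hL).1 hdS
  simp only [goodMultipliers, mem_filter] at hdk
  obtain ⟨-, hle, hp, hP⟩ := hdk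
  exact ⟨hdL, hle.trans (mul_rpow_one_sub_le hx hdx), hp, hP⟩

theorem card_smallDivisors_le_two_mul {B : ℝ} (hL : Squarefree L) (hq₀ : 1 < q₀) :
    #(smallDivisors L B) ≤ 2 * #{d ∈ smallDivisors L B | ¬ q₀ ∣ d} := by
  refine card_le_two_mul_card_filter_not_dvd (fun d hd => ?_) (fun d hd e he => ?_) hq₀ <;>
    obtain ⟨hdL, hdB⟩ := (mem_smallDivisors hL.ne_zero).1 hd
  · exact hL.squarefree_of_dvd hdL
  · have hed : e ≤ d := Nat.le_of_dvd (Nat.pos_of_dvd_of_pos hdL hL.ne_zero.bot_lt) he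
    exact (mem_smallDivisors hL.ne_zero).2 ⟨he.trans hdL, (Nat.cast_le.2 hed).trans hdB⟩

theorem SufficientlyLarge.exists_mem_evenCoprimeMultipliers (hx : SufficientlyLarge n η x)
    (hn : 1 ≤ n) (hη0 : 0 < η) (hη : η < 1 / 2) (hq₀ : 1 < q₀)
    (H : HasManyPrimesOneMod P n η x q₀) (hL : Squarefree L)
    (hLx : ∀ q ∈ L.primeFactors, (q : ℝ) ≤ x ^ ((1 - η) / 2))
    (hsum : ∑ q ∈ L.primeFactors, 1 / (q : ℝ) ≤ (1 - η) / (32 * n)) :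
    ∃ k ∈ evenCoprimeMultipliers L (x ^ (1 - η)),
      #(smallDivisors L (x ^ η)) / (8 * n * Real.log x) ≤
        #{d ∈ smallDivisors L (x ^ η) | k ∈ goodMultipliers P L (x ^ (1 - η)) d} := by
  have hx0 : 0 < x := one_pos.trans hx.one_lt
  have hlog : 0 < Real.log x := Real.log_pos hx.one_lt
  set S := smallDivisors L (x ^ η)
  have h1 : 1 ∈ S := (mem_smallDivisors hL.ne_zero).2
    ⟨one_dvd L, mod_cast Real.one_le_rpow hx.one_lt.le hη0.le⟩
  have hhalf : (#S : ℝ) ≤ 2 * #{d ∈ S | ¬ q₀ ∣ d} :=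
    mod_cast card_smallDivisors_le_two_mul hL hq₀
  obtain ⟨k, hk, hcard⟩ := exists_mem_evenCoprimeMultipliers_le_card (P := P) (L := L)
    (X := x ^ (1 - η)) (s := {d ∈ S | ¬ q₀ ∣ d}) (c := 1 / (8 * n * Real.log x))
    ⟨1, mem_filter.2 ⟨h1, by simpa using hq₀.ne'⟩⟩ (by positivity) (by positivity)
    fun d hd => by
      obtain ⟨hdS, hdq₀⟩ := mem_filter.1 hd
      obtain ⟨hdL, hdx⟩ := (mem_smallDivisors hL.ne_zero).1 hdS
      rw [one_div_mul_eq_div]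
      exact hx.le_card_goodMultipliers (one_pos.trans_le hn) hη H hL.ne_zero
        (fun q => thirtyTwo_le_of_mem_primeFactors hn hη0 hsum) hLx hsum hdL hdx hdq₀
  refine ⟨k, hk, ?_⟩
  calc #S / (8 * n * Real.log x) ≤ 2 * #{d ∈ S | ¬ q₀ ∣ d} / (8 * n * Real.log x) := by gcongr
    _ = 2 * (1 / (8 * n * Real.log x)) * #{d ∈ S | ¬ q₀ ∣ d} := by ring
    _ ≤ #{d ∈ {d ∈ S | ¬ q₀ ∣ d} | k ∈ goodMultipliers P L (x ^ (1 - η)) d} := hcard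
    _ ≤ #{d ∈ S | k ∈ goodMultipliers P L (x ^ (1 - η)) d} := by
        gcongr
        exact filter_subset _ _

theorem exists_odd_not_dvd {N : ℕ} (hq₀ : 1 < q₀) (hN : 7 ≤ N) :
    ∃ q, Odd q ∧ ¬ q₀ ∣ q ∧ q ≤ N ∧ N < 2 * q := by
  set a := 2 * ((N - 3) / 2) + 1
  have ha : Odd a := odd_two_mul_add_one _
  by_cases hdvd : q₀ ∣ a
  · refine ⟨a + 2, ha.add_even even_two, fun h => hq₀.ne' ?_, by lia, by lia⟩
    exact Nat.eq_one_of_dvd_coprimes ha.coprime_two_right hdvd ((Nat.dvd_add_right hdvd).1 h)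
  · exact ⟨a, ha, hdvd, by lia, by lia⟩

theorem not_hasManyPrimesOneMod (hn : 0 < n) (hη : 1 / 2 ≤ η) (hx : 64 ≤ x) (hq₀ : 1 < q₀) :
    ¬ HasManyPrimesOneMod P n η x q₀ := by
  intro H
  set r := x ^ ((1 : ℝ) / 2)
  have hrr : r * r = x := by
    rw [← Real.rpow_add (by linarith), add_halves, Real.rpow_one]
  have hr0 : 0 ≤ r := Real.rpow_nonneg (by linarith) _
  have hr : 8 ≤ r := by nlinarith
  have hN : 7 ≤ ⌊r⌋₊ := Nat.le_floor (by norm_num; linarith)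
  obtain ⟨q, hodd, hdvd, hqN, hNq⟩ := exists_odd_not_dvd hq₀ hN
  have hempty : {p : ℕ | p.Prime ∧ (p : ℝ) < r + 1 ∧ (p : ℤ) ≡ 1 [ZMOD q] ∧ P p} = ∅ := by
    refine Set.eq_empty_of_forall_notMem ?_
    rintro p ⟨hp, hpr, hmod, -⟩
    obtain ⟨k, hk, rfl⟩ := exists_eq_mul_add_one hp hmod
    have hqk : q * k ≤ ⌊r⌋₊ := Nat.le_floor (by push_cast at hpr ⊢; linarith)
    obtain rfl : k = 1 := by nlinarith
    rw [mul_one] at hp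
    have htwo := hp.even_iff.1 hodd.add_one
    lia
  have hcount := H (r + 1) (by linarith) (by nlinarith) q hodd.pos
    (((Nat.le_floor_iff hr0).1 hqN).trans
      (Real.rpow_le_rpow_of_exponent_le (by linarith) hη)) hdvd
  rw [hempty, Set.ncard_empty, Nat.cast_zero] at hcount
  have hpi : 0 < primePi (r + 1) := by
    rw [primePi_eq_primeCounting_floor (by linarith), Nat.pos_iff_ne_zero, Ne,
      Nat.primeCounting_eq_zero_iff, not_le]
    exact Nat.le_floor (by norm_num; linarith)
  have hφ := Nat.totient_pos.2 hodd.pos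
  exact hcount.not_gt (by positivity)

theorem prachar_variant_general (P : ℕ → Prop) {n η : ℝ} (hn : 1 ≤ n) (hη0 : 0 < η) (hη1 : η < 1) :
    ∀ᶠ x in atTop, ∀ q₀ : ℕ, 1 < q₀ → HasManyPrimesOneMod P n η x q₀ →
      ∀ L : ℕ, Squarefree L → (∀ p : ℕ, p.Prime → p ∣ L → (p : ℝ) ≤ x ^ ((1 - η) / 2)) →
        ∑ q ∈ L.primeFactors, (1 : ℝ) / q ≤ (1 - η) / (32 * n) →
        ∃ k : ℕ, 0 < k ∧ (k : ℝ) ≤ x ^ (1 - η) ∧ k.Coprime L ∧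
          ({d : ℕ | d ∣ L ∧ ((d * k + 1 : ℕ) : ℝ) ≤ x ∧ (d * k + 1).Prime ∧
              P (d * k + 1)}.ncard : ℝ) ≥
            ({d : ℕ | d ∣ L ∧ 1 ≤ d ∧ (d : ℝ) ≤ x ^ η}.ncard : ℝ) / (8 * n * Real.log x) := by
  have hn0 : 0 < n := one_pos.trans_le hn
  filter_upwards [eventually_sufficientlyLarge n hη1, eventually_ge_atTop 64]
    with x hx hx64 q₀ hq₀ H L hL hLx hsum
  rcases le_or_gt (1 / 2) η with hη | hη
  · exact absurd H (not_hasManyPrimesOneMod hn0 hη hx64 hq₀)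
  obtain ⟨k, hk, hcard⟩ := hx.exists_mem_evenCoprimeMultipliers hn hη0 hη hq₀ H hL
    (fun q hq => hLx q (Nat.prime_of_mem_primeFactors hq) (Nat.dvd_of_mem_primeFactors hq)) hsum
  obtain ⟨hkX, -, hkL⟩ := mem_filter.1 hk
  rw [mem_Ioc, Nat.le_floor_iff (Real.rpow_nonneg (by linarith) _)] at hkX
  refine ⟨k, hkX.1, hkX.2, hkL, ?_⟩
  rw [ncard_setOf_dvd_eq_card_smallDivisors hL.ne_zero]
  exact hcard.trans (Nat.cast_le.2
    (card_filter_mem_goodMultipliers_le_ncard (by linarith) hL.ne_zero))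

end Multipliers

/-- Variant of Prachar's theorem: with `K` the splitting field of `f`, `n = [K:ℚ]`,
`0 < η < 1`, and `x` sufficiently large (in terms of `K` and `η`), if there is an integer
`q₀ > log x` such that for every `x^(1/2) < y ≤ x`, every `q ≤ x^η` with `q₀ ∤ q`, and
every `a` with `gcd(a,q) = 1` the number of primes `p < y`, `p ≡ a (mod q)`, with `f`
splitting into linear factors mod `p` is at least `π(y)/(2 n φ(q))`, then for every
squarefree `L` whose prime factors are `≤ x^((1-η)/2)` and with `∑_{q | L} 1/q ≤
(1-η)/(32 n)`, there is a positive integer `k ≤ x^(1-η)` coprime to `L` such that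
`#{d ∣ L : dk+1 ≤ x is prime and f splits mod dk+1} ≥ #{d ∣ L : d ≤ x^η}/(8 n log x)`. -/
theorem prachar_variant (f : Polynomial ℤ) (hmonic : f.Monic)
    (K : Type*) [Field K] [Algebra ℚ K]
    (hK : Polynomial.IsSplittingField ℚ K (f.map (Int.castRingHom ℚ)))
    (n : ℕ) (hn : n = Module.finrank ℚ K)
    (η : ℝ) (hη0 : 0 < η) (hη1 : η < 1) :
    ∃ x₁ : ℝ, ∀ x : ℝ, x₁ ≤ x →
      (∃ q₀ : ℕ, Real.log x < (q₀ : ℝ) ∧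
        ∀ y : ℝ, x ^ ((1 : ℝ) / 2) < y → y ≤ x →
          ∀ q : ℕ, 0 < q → (q : ℝ) ≤ x ^ η → ¬ (q₀ ∣ q) →
            ∀ a : ℤ, Int.gcd a (q : ℤ) = 1 →
              (primePi y : ℝ) / (2 * (n : ℝ) * (Nat.totient q : ℝ)) ≤
                ({p : ℕ | p.Prime ∧ (p : ℝ) < y ∧ (p : ℤ) ≡ a [ZMOD (q : ℤ)] ∧
                  SplitsModLinear f p}.ncard : ℝ)) →
      ∀ L : ℕ, 0 < L → Squarefree L →
        (∀ p : ℕ, p.Prime → p ∣ L → (p : ℝ) ≤ x ^ ((1 - η) / 2)) →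
        (∑ q ∈ L.primeFactors, (1 : ℝ) / (q : ℝ)) ≤ (1 - η) / (32 * (n : ℝ)) →
        ∃ k : ℕ, 0 < k ∧ (k : ℝ) ≤ x ^ (1 - η) ∧ Nat.Coprime k L ∧
          ({d : ℕ | d ∣ L ∧ ((d * k + 1 : ℕ) : ℝ) ≤ x ∧ (d * k + 1).Prime ∧
              SplitsModLinear f (d * k + 1)}.ncard : ℝ) ≥
            ({d : ℕ | d ∣ L ∧ 1 ≤ d ∧ (d : ℝ) ≤ x ^ η}.ncard : ℝ) /
              (8 * (n : ℝ) * Real.log x) := by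
  have := Polynomial.IsSplittingField.finiteDimensional K (f.map (Int.castRingHom ℚ))
  have hn1 : (1 : ℝ) ≤ n := by
    rw [hn]
    exact_mod_cast Module.finrank_pos (R := ℚ) (M := K)
  refine Filter.eventually_atTop.1 ?_
  filter_upwards [prachar_variant_general (SplitsModLinear f) hn1 hη0 hη1,
    Real.tendsto_log_atTop.eventually_ge_atTop 1] with x hx hlog ⟨q₀, hq₀, H⟩ L _
  exact hx q₀ (mod_cast hlog.trans_lt hq₀)
    (fun y hy hyx q hq hqx hqd => H y hy hyx q hq hqx hqd 1 (by simp)) L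
end
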